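/- Let G=(V,E,I,T) be an inner Eulerian grapht with |E|≤ℵ₀ that satisfies the linkability condition. Then for every edge e incident with some terminal vertex (i.e., e∈∪_{t∈T}δ_G(t)) there exists a T-path P through e such that the grapht G−E(P) is inner Eulerian and satisfies the linkability condition. -/

import Mathlib

/-! Common definitions: graphts (multigraphs with terminals), walks, paths, cycles,
edge cuts, inner Eulerian graphts, path systems, linkages, Erdős–Menger cuts,
restriction (edge deletion) and contraction. -/

universe u v

/-- A *grapht*: a multigraph (no loops, parallel edges allowed) given by an incidence
function `I : E → Sym2 V`, together with a set `T` of at least two terminal vertices. -/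
structure Grapht (V : Type u) (E : Type v) where
  I : E → Sym2 V
  loopless : ∀ e : E, ¬ (I e).IsDiag
  T : Set V
  T_nontrivial : T.Nontrivial

namespace Grapht

variable {V : Type u} {E : Type v}

/-- `G.IsWalk vs es` holds when `vs` is the vertex sequence and `es` the edge sequence
of a walk in `G`. -/
inductive IsWalk (G : Grapht V E) : List V → List E → Prop
  | nil (v : V) : IsWalk G [v] []
  | cons {u w : V} {vs : List V} {e : E} {es : List E} :
      G.I e = s(u, w) → IsWalk G (w :: vs) es → IsWalk G (u :: w :: vs) (e :: es)

/-- A finite path in the grapht `G` (no repeated vertices), with endpoints `first`, `last`. -/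
structure Path (G : Grapht V E) where
  first : V
  last : V
  verts : List V
  edges : List E
  isWalk : G.IsWalk verts edges
  nodup : verts.Nodup
  head_eq : verts.head? = some first
  getLast_eq : verts.getLast? = some last

/-- A finite cycle in the grapht `G`. -/
structure Cycle (G : Grapht V E) where
  verts : List V
  edges : List E
  isWalk : G.IsWalk verts edges
  closed : verts.head? = verts.getLast?
  nontrivial : edges ≠ []
  edges_nodup : edges.Nodup
  tail_nodup : verts.tail.Nodup

variable {G : Grapht V E}

/-- The internal (inner) vertices of a path. -/
def Path.inner (P : G.Path) : List V := (P.verts.drop 1).dropLast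

/-- The edge set of a path. -/
def Path.edgeSet (P : G.Path) : Set E := {e | e ∈ P.edges}

/-- The edge set of a cycle. -/
def Cycle.edgeSet (C : G.Cycle) : Set E := {e | e ∈ C.edges}

variable (G)

/-- `δ_G(X)`: the set of edges with exactly one endpoint in `X`. -/
def edgeCut (X : Set V) : Set E :=
  {e | ∃ u w, G.I e = s(u, w) ∧ u ∈ X ∧ w ∉ X}

/-- A grapht is *inner Eulerian* if there is no `X ⊆ V ∖ T` whose cut `δ(X)` is a
finite set of odd size. -/
def InnerEulerian : Prop :=
  ∀ X : Set V, Disjoint X G.T → ¬ ((G.edgeCut X).Finite ∧ Odd (G.edgeCut X).ncard)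

/-- An `AB`-path: a path with first vertex in `A`, last vertex in `B` and no internal
vertex in `A ∪ B`. -/
def IsABPath (A B : Set V) (P : G.Path) : Prop :=
  P.first ∈ A ∧ P.last ∈ B ∧ ∀ v ∈ P.inner, v ∉ A ∪ B

/-- A `T`-path: a path between two distinct terminal vertices without internal
terminal vertices. -/
def IsTPath (P : G.Path) : Prop :=
  P.first ∈ G.T ∧ P.last ∈ G.T ∧ P.first ≠ P.last ∧ ∀ v ∈ P.inner, v ∉ G.T

/-- A system of pairwise edge-disjoint paths. -/
def EdgeDisjoint (Ps : Set G.Path) : Prop :=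
  Ps.Pairwise fun P Q => ∀ e, e ∈ P.edges → e ∉ Q.edges

/-- A system of pairwise edge-disjoint `T`-paths. -/
def IsTPathSystem (Ps : Set G.Path) : Prop :=
  G.EdgeDisjoint Ps ∧ ∀ P ∈ Ps, G.IsTPath P

/-- The set of edges used by a path system. -/
def sysEdges (Ps : Set G.Path) : Set E := ⋃ P ∈ Ps, P.edgeSet

/-- `C` is *orthogonal* to the path system `Ps`: `C` consists of exactly one edge from
each path of `Ps`. -/
def Orthogonal (C : Set E) (Ps : Set G.Path) : Prop :=
  (∀ P ∈ Ps, ∃! e, e ∈ C ∧ e ∈ P.edges) ∧ ∀ e ∈ C, ∃ P ∈ Ps, e ∈ P.edges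

/-- `C` separates `A` and `B`: every `AB`-path meets `C` (i.e. `G − C` has no `AB`-path). -/
def Separates (C : Set E) (A B : Set V) : Prop :=
  ∀ P : G.Path, G.IsABPath A B P → ∃ e ∈ C, e ∈ P.edges

/-- An `AB`-cut. -/
def IsABCut (A B : Set V) (C : Set E) : Prop :=
  ∀ P : G.Path, G.IsABPath A B P → ∃ e ∈ C, e ∈ P.edges

/-- An Erdős–Menger `AB`-cut: an `AB`-cut orthogonal to some system of pairwise
edge-disjoint `AB`-paths. -/
def IsEMABCut (A B : Set V) (C : Set E) : Prop :=
  G.IsABCut A B C ∧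
    ∃ Ps : Set G.Path, G.EdgeDisjoint Ps ∧ (∀ P ∈ Ps, G.IsABPath A B P) ∧ G.Orthogonal C Ps

/-- The order `⊴` on (Erdős–Menger) `AB`-cuts: on every `AB`-path the first edge of `C`
comes no later than the first edge of `C'`. -/
def ABCutLE (A B : Set V) (C C' : Set E) : Prop :=
  ∀ P : G.Path, G.IsABPath A B P →
    ∀ i : Fin P.edges.length, P.edges.get i ∈ C' →
      ∃ j : Fin P.edges.length, (j : ℕ) ≤ (i : ℕ) ∧ P.edges.get j ∈ C

/-- `C` is the `⊴`-largest Erdős–Menger `AB`-cut. -/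
def IsLargestEMABCut (A B : Set V) (C : Set E) : Prop :=
  G.IsEMABCut A B C ∧ ∀ C', G.IsEMABCut A B C' → G.ABCutLE A B C' C

/-- A system `Ps` of pairwise edge-disjoint `T`-paths *links* the terminal `t`:
it covers `δ(t)`. -/
def Links (Ps : Set G.Path) (t : V) : Prop :=
  G.IsTPathSystem Ps ∧ ∀ e ∈ G.edgeCut {t}, ∃ P ∈ Ps, e ∈ P.edges

/-- The terminal `t` is linked. -/
def Linked (t : V) : Prop := ∃ Ps : Set G.Path, G.Links Ps t

/-- The linkability condition: every terminal is linked. -/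
def LinkabilityCondition : Prop := ∀ t ∈ G.T, G.Linked t

/-- A perfect linkage: a system of pairwise edge-disjoint `T`-paths linking every
terminal. -/
def IsPerfectLinkage (Ps : Set G.Path) : Prop :=
  G.IsTPathSystem Ps ∧ ∀ t ∈ G.T, ∀ e ∈ G.edgeCut {t}, ∃ P ∈ Ps, e ∈ P.edges

/-- In the two-terminal setting: a system of pairwise edge-disjoint `st`-paths
covering `δ(s)` (a linkage of `s`). -/
def IsStLinkage (s t : V) (Ps : Set G.Path) : Prop :=
  G.EdgeDisjoint Ps ∧ (∀ P ∈ Ps, G.IsABPath {s} {t} P) ∧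
    ∀ e ∈ G.edgeCut {s}, ∃ P ∈ Ps, e ∈ P.edges

/-- `s` is linked (two-terminal setting). -/
def StLinked (s t : V) : Prop := ∃ Ps : Set G.Path, G.IsStLinkage s t Ps

/-- `λ_G(A,B)`: the maximal number of pairwise edge-disjoint `AB`-paths. -/
noncomputable def lambda (A B : Set V) : ℕ :=
  sSup {n : ℕ | ∃ Ps : Set G.Path, G.EdgeDisjoint Ps ∧ (∀ P ∈ Ps, G.IsABPath A B P) ∧
    Ps.Finite ∧ Ps.ncard = n}

/-- The grapht obtained by deleting all edges outside `F`. -/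
def restrict (F : Set E) : Grapht V F where
  I e := G.I e.1
  loopless e := G.loopless e.1
  T := G.T
  T_nontrivial := G.T_nontrivial

/-- The map sending every vertex of a contracted set `X t` (`t ∈ T`) to `t`. -/
noncomputable def contractMap (X : V → Set V) : V → V := fun v =>
  letI := Classical.dec (∃ u ∈ G.T, v ∈ X u)
  if h : ∃ u ∈ G.T, v ∈ X u then h.choose else v

/-- The contraction `G/ℱ` of the family `ℱ = {X t : t ∈ T}`: each `X t` is contracted
to `t` and the arising loops are deleted. -/
noncomputable def contract (X : V → Set V) :
    Grapht V {e : E // ¬ ((G.I e).map (G.contractMap X)).IsDiag} where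
  I e := (G.I e.1).map (G.contractMap X)
  loopless e := e.2
  T := G.T
  T_nontrivial := G.T_nontrivial

end Grapht

/-!
The proof rests on two facts about a subgraph `H` and a terminal `u`.

*Shifting.* If `H` is inner Eulerian and all but one edge of `δ(u)` can be linked, then `u` is
linked. By parity, the component of the unused edges at the tip of the deficient spoke meets
infinitely many spokes, so the deficiency can be handed on to ever new spokes; every spoke changes
only finitely often, and the limit is a linkage.

*Detours.* If every terminal is linked in `H`, but `u` is not linked in `H - f`, then the
augmenting path method yields a set `X` containing no terminal but `u`, with `f ∈ δ(X)`, all of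
whose cut edges are used outwards by the linkage of `u`. Hence `u` is joined to the edges of `δ(X)`
by edge-disjoint arms inside `X`, and linkages of the other terminals can be rerouted along them.
Removing the arm of `f` costs every terminal at most one spoke.

Now delete the edges of a `T`-path through `e` from a linkage of `t` one by one. If the terminal
`u` ceases to be linked at the edge `f`, the path up to `f` followed by the arm of `f` contains a
`T`-path from `t` to another terminal; it starts with `e`, and by shifting its removal keeps all
terminals linked.
-/

namespace Grapht

variable {V : Type u} {E : Type v} {G : Grapht V E}

section Cuts

theorem exists_eq_mk_of_mem_edge {k : E} {x : V} (h : x ∈ G.I k) : ∃ y, G.I k = s(x, y) :=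
  Sym2.mem_iff_exists.mp h

theorem ne_of_edge_eq {k : E} {x y : V} (h : G.I k = s(x, y)) : x ≠ y := fun hxy =>
  G.loopless k (by rw [h, Sym2.mk_isDiag_iff, hxy])

theorem mem_edgeCut_iff_of_edge_eq {k : E} {x y : V} (h : G.I k = s(x, y)) (X : Set V) :
    k ∈ G.edgeCut X ↔ ¬(x ∈ X ↔ y ∈ X) := by
  simp only [edgeCut, Set.mem_ofPred_eq, h, Sym2.eq_iff]
  grind

theorem mem_edgeCut_iff {k : E} {X : Set V} :
    k ∈ G.edgeCut X ↔ (∃ x ∈ G.I k, x ∈ X) ∧ ∃ y ∈ G.I k, y ∉ X := by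
  obtain ⟨x, y, h⟩ : ∃ x y, G.I k = s(x, y) := (Sym2.exists.mp ⟨_, rfl⟩)
  rw [mem_edgeCut_iff_of_edge_eq h]
  simp only [h, Sym2.mem_iff, exists_eq_or_imp, exists_eq_left]
  tauto

theorem mem_edgeCut_singleton {k : E} {p : V} : k ∈ G.edgeCut {p} ↔ p ∈ G.I k := by
  refine ⟨fun h => ?_, fun h => ?_⟩
  · obtain ⟨⟨x, hx, rfl⟩, -⟩ := mem_edgeCut_iff.mp h
    exact hx
  · obtain ⟨y, hy⟩ := exists_eq_mk_of_mem_edge h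
    exact (mem_edgeCut_iff_of_edge_eq hy _).mpr (by simpa using (ne_of_edge_eq hy).symm)

end Cuts

/-- An edge together with a direction of traversal. Walks are handled as lists of darts, because
the augmenting argument has to know in which direction an edge is used. -/
@[ext] structure Dart (G : Grapht V E) where
  src : V
  edge : E
  tgt : V
  edge_eq : G.I edge = s(src, tgt)

namespace Dart

/-- The same edge traversed in the other direction. -/
def reverse (d : G.Dart) : G.Dart := ⟨d.tgt, d.edge, d.src, d.edge_eq.trans Sym2.eq_swap⟩

theorem mem_edge_iff (d : G.Dart) {v : V} : v ∈ G.I d.edge ↔ v = d.src ∨ v = d.tgt := by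
  rw [d.edge_eq, Sym2.mem_iff]

theorem src_mem (d : G.Dart) : d.src ∈ G.I d.edge := d.mem_edge_iff.mpr (Or.inl rfl)

theorem tgt_mem (d : G.Dart) : d.tgt ∈ G.I d.edge := d.mem_edge_iff.mpr (Or.inr rfl)

theorem src_ne_tgt (d : G.Dart) : d.src ≠ d.tgt := ne_of_edge_eq d.edge_eq

theorem edge_mem_edgeCut_iff (d : G.Dart) {X : Set V} :
    d.edge ∈ G.edgeCut X ↔ ¬(d.src ∈ X ↔ d.tgt ∈ X) :=
  mem_edgeCut_iff_of_edge_eq d.edge_eq X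

theorem eq_or_eq_reverse_of_edge_eq {d d' : G.Dart} (h : d.edge = d'.edge) :
    d = d' ∨ d = d'.reverse := by
  have hI := d.edge_eq
  rw [h, d'.edge_eq, Sym2.eq_iff] at hI
  rcases hI with ⟨hs, ht⟩ | ⟨hs, ht⟩
  · exact Or.inl (Dart.ext hs.symm h ht.symm)
  · exact Or.inr (Dart.ext ht.symm h hs.symm)

theorem exists_outward {X : Set V} {k : E} (h : k ∈ G.edgeCut X) :
    ∃ d : G.Dart, d.edge = k ∧ d.src ∈ X ∧ d.tgt ∉ X := by
  obtain ⟨x, y, hk, hx, hy⟩ := h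
  exact ⟨⟨x, k, y, hk⟩, rfl, hx, hy⟩

end Dart

/-- The set of edges traversed by a list of darts. -/
def dartEdges (l : List G.Dart) : Set E := {k | k ∈ l.map Dart.edge}

theorem mem_dartEdges {l : List G.Dart} {k : E} : k ∈ dartEdges l ↔ ∃ d ∈ l, d.edge = k :=
  List.mem_map

theorem edge_mem_dartEdges {l : List G.Dart} {d : G.Dart} (h : d ∈ l) : d.edge ∈ dartEdges l :=
  mem_dartEdges.mpr ⟨d, h, rfl⟩

@[simp] theorem dartEdges_nil : dartEdges ([] : List G.Dart) = ∅ := by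
  simp [dartEdges]

@[simp] theorem dartEdges_cons (d : G.Dart) (l : List G.Dart) :
    dartEdges (d :: l) = insert d.edge (dartEdges l) := by
  ext k
  simp [dartEdges]

@[simp] theorem dartEdges_append (l m : List G.Dart) :
    dartEdges (l ++ m) = dartEdges l ∪ dartEdges m := by
  ext k
  simp [dartEdges]

theorem dartEdges_mono {l m : List G.Dart} (h : l ⊆ m) : dartEdges l ⊆ dartEdges m :=
  fun _ hk => List.map_subset _ h hk

theorem finite_dartEdges (l : List G.Dart) : (dartEdges l).Finite := List.finite_toSet _

section Walks

/-- `IsDartWalk a l b`: the darts of `l`, in this order, lead from `a` to `b`. -/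
def IsDartWalk : V → List G.Dart → V → Prop
  | a, [], b => a = b
  | a, d :: l, b => d.src = a ∧ IsDartWalk d.tgt l b

/-- The vertices visited by a list of darts starting at `a`. -/
def support (a : V) (l : List G.Dart) : List V := a :: l.map Dart.tgt

@[simp] theorem support_cons (a : V) (d : G.Dart) (l : List G.Dart) :
    support a (d :: l) = a :: support d.tgt l := rfl

@[simp] theorem isDartWalk_nil {a b : V} : IsDartWalk a ([] : List G.Dart) b ↔ a = b := Iff.rfl

@[simp] theorem isDartWalk_cons {a b : V} {d : G.Dart} {l : List G.Dart} :
    IsDartWalk a (d :: l) b ↔ d.src = a ∧ IsDartWalk d.tgt l b := Iff.rfl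

theorem isDartWalk_append {a b : V} {l m : List G.Dart} :
    IsDartWalk a (l ++ m) b ↔ ∃ c, IsDartWalk a l c ∧ IsDartWalk c m b := by
  induction l generalizing a with
  | nil => simp
  | cons d l ih => simp [ih, and_assoc]

namespace IsDartWalk

variable {a b c : V} {l m : List G.Dart}

theorem append (hl : IsDartWalk a l b) (hm : IsDartWalk b m c) : IsDartWalk a (l ++ m) c :=
  isDartWalk_append.mpr ⟨b, hl, hm⟩

theorem end_unique (h : IsDartWalk a l b) (h' : IsDartWalk a l c) : b = c := by
  induction l generalizing a with
  | nil => exact h.symm.trans h'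
  | cons d l ih => exact ih h.2 h'.2

theorem reverse (h : IsDartWalk a l b) : IsDartWalk b (l.map Dart.reverse).reverse a := by
  induction l generalizing a with
  | nil => exact h.symm
  | cons d l ih =>
    rw [List.map_cons, List.reverse_cons]
    exact (ih h.2).append ⟨rfl, h.1⟩

theorem split_at {d : G.Dart} (h : IsDartWalk a (l ++ d :: m) b) :
    IsDartWalk a l d.src ∧ IsDartWalk d.tgt m b := by
  obtain ⟨_, hl, rfl, hm⟩ := isDartWalk_append.mp h
  exact ⟨hl, hm⟩

theorem exists_split_of_mem_support {v : V} (h : IsDartWalk a l b) (hv : v ∈ support a l) :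
    ∃ l₁ l₂, l = l₁ ++ l₂ ∧ IsDartWalk a l₁ v ∧ IsDartWalk v l₂ b := by
  induction l generalizing a with
  | nil =>
    obtain rfl : v = a := by simpa [support] using hv
    exact ⟨[], [], rfl, rfl, h⟩
  | cons d l ih =>
    rcases List.mem_cons.mp hv with rfl | hv
    · exact ⟨[], d :: l, rfl, rfl, h⟩
    · obtain ⟨l₁, l₂, rfl, h₁, h₂⟩ := ih h.2 hv
      exact ⟨d :: l₁, l₂, rfl, ⟨h.1, h₁⟩, h₂⟩

theorem end_mem_support (h : IsDartWalk a l b) : b ∈ support a l := by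
  induction l generalizing a with
  | nil => simpa [support] using h.symm
  | cons d l ih => exact List.mem_cons_of_mem _ (ih h.2)

theorem mem_support_of_mem_edge {k : E} {v : V} (h : IsDartWalk a l b) (hk : k ∈ dartEdges l)
    (hv : v ∈ G.I k) : v ∈ support a l := by
  induction l generalizing a with
  | nil => simp at hk
  | cons d l ih =>
    obtain ⟨rfl, hl⟩ := h
    rw [dartEdges_cons] at hk
    rcases hk with rfl | hk
    · rcases d.mem_edge_iff.mp hv with rfl | rfl <;> simp [support]
    · exact List.mem_cons_of_mem _ (ih hl hk)

theorem exists_mem_edge_of_mem_support {v : V} (hv : v ∈ support a l) (hva : v ≠ a) :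
    ∃ k ∈ dartEdges l, v ∈ G.I k := by
  obtain ⟨d, hd, rfl⟩ := List.mem_map.mp ((List.mem_cons.mp hv).resolve_left hva)
  exact ⟨d.edge, edge_mem_dartEdges hd, d.tgt_mem⟩

theorem exists_start_dart (h : IsDartWalk a l b) (hab : b ≠ a) : ∃ d ∈ l, d.src = a := by
  cases l with
  | nil => exact absurd h.symm hab
  | cons d l => exact ⟨d, List.mem_cons_self, h.1⟩

theorem support_sublist_append {v : V} (h : IsDartWalk a l v) (m : List G.Dart) :
    (support v m).Sublist (support a (l ++ m)) := by
  induction l generalizing a with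
  | nil => exact h ▸ List.Sublist.refl _
  | cons d l ih => exact (ih h.2).cons _

theorem exists_path (h : IsDartWalk a l b) :
    ∃ l' ⊆ l, IsDartWalk a l' b ∧ (support a l').Nodup := by
  induction l generalizing a with
  | nil => exact ⟨[], List.Subset.refl _, h, List.nodup_singleton a⟩
  | cons d l ih =>
    obtain ⟨l', hsub, hl', hnd⟩ := ih h.2
    by_cases ha : a ∈ support d.tgt l'
    · obtain ⟨l₁, l₂, rfl, h₁, h₂⟩ := hl'.exists_split_of_mem_support ha
      exact ⟨l₂, fun x hx => List.mem_cons_of_mem _ (hsub (List.mem_append_right _ hx)), h₂,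
        hnd.sublist (h₁.support_sublist_append l₂)⟩
    · exact ⟨d :: l', List.cons_subset_cons d hsub, ⟨h.1, hl'⟩, List.nodup_cons.mpr ⟨ha, hnd⟩⟩

theorem exists_exit {X : Set V} (h : IsDartWalk a l b) (ha : a ∈ X)
    (hv : ∃ v ∈ support a l, v ∉ X) :
    ∃ l₁ d l₂, l = l₁ ++ d :: l₂ ∧ (∀ v ∈ support a l₁, v ∈ X) ∧ d.src ∈ X ∧ d.tgt ∉ X := by
  induction l generalizing a with
  | nil =>
    obtain ⟨v, hv, hvX⟩ := hv
    exact absurd (List.mem_singleton.mp hv ▸ ha) hvX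
  | cons d l ih =>
    obtain ⟨rfl, hl⟩ := h
    by_cases hd : d.tgt ∈ X
    · obtain ⟨v, hv, hvX⟩ := hv
      have hvl := (List.mem_cons.mp hv).resolve_left fun hva => hvX (hva ▸ ha)
      obtain ⟨l₁, d', l₂, rfl, hl₁, hd'⟩ := ih hl hd ⟨v, hvl, hvX⟩
      exact ⟨d :: l₁, d', l₂, rfl, List.forall_mem_cons.mpr ⟨ha, hl₁⟩, hd'⟩
    · exact ⟨[], d, l, rfl, by simpa [support] using ha, ha, hd⟩

theorem support_subset_of_forall_entering {X : Set V} (h : IsDartWalk a l b) (hb : b ∈ X)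
    (hX : ∀ d ∈ l, d.tgt ∈ X → d.src ∈ X) : ∀ v ∈ support a l, v ∈ X := by
  induction l generalizing a with
  | nil =>
    obtain rfl := isDartWalk_nil.mp h
    simpa [support] using hb
  | cons d l ih =>
    obtain ⟨rfl, hl⟩ := h
    have hall := ih hl fun d' hd' => hX d' (List.mem_cons_of_mem _ hd')
    exact List.forall_mem_cons.mpr
      ⟨hX d List.mem_cons_self (hall d.tgt List.mem_cons_self), hall⟩

end IsDartWalk

/-- `l` is a walk from `a` to `b` that repeats no edge. -/
structure IsDartTrail (a : V) (l : List G.Dart) (b : V) : Prop where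
  isWalk : IsDartWalk a l b
  nodup : (l.map Dart.edge).Nodup

theorem disjoint_dartEdges_of_nodup {l m : List G.Dart} (h : ((l ++ m).map Dart.edge).Nodup) :
    Disjoint (dartEdges l) (dartEdges m) := by
  rw [List.map_append] at h
  exact Set.disjoint_left.mpr fun k hl hm => (List.disjoint_of_nodup_append h) hl hm

theorem IsDartWalk.isDartTrail {a b : V} {l : List G.Dart} (h : IsDartWalk a l b)
    (hnd : (support a l).Nodup) : IsDartTrail a l b := by
  refine ⟨h, ?_⟩
  induction l generalizing a with
  | nil => exact List.nodup_nil
  | cons d l ih =>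
    obtain ⟨rfl, hl⟩ := h
    obtain ⟨hd, hnd⟩ := List.nodup_cons.mp hnd
    exact List.nodup_cons.mpr ⟨fun hk => hd (hl.mem_support_of_mem_edge hk d.src_mem), ih hl hnd⟩

namespace IsDartTrail

variable {a b c : V} {l m : List G.Dart}

theorem append (hl : IsDartTrail a l b) (hm : IsDartTrail b m c)
    (hd : Disjoint (dartEdges l) (dartEdges m)) : IsDartTrail a (l ++ m) c := by
  refine ⟨hl.isWalk.append hm.isWalk, ?_⟩
  rw [List.map_append]
  exact hl.nodup.append hm.nodup fun k hkl hkm => Set.disjoint_left.mp hd hkl hkm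

theorem split (h : IsDartTrail a (l ++ m) b) (hl : IsDartWalk a l c) :
    IsDartTrail a l c ∧ IsDartTrail c m b ∧ Disjoint (dartEdges l) (dartEdges m) := by
  obtain ⟨c', hl', hm⟩ := isDartWalk_append.mp h.isWalk
  obtain rfl := hl'.end_unique hl
  have hnd := h.nodup
  rw [List.map_append] at hnd
  exact ⟨⟨hl, hnd.of_append_left⟩, ⟨hm, hnd.of_append_right⟩, disjoint_dartEdges_of_nodup h.nodup⟩

theorem odd_ncard_inter_edgeCut_iff (h : IsDartTrail a l b) (Y : Set V) :
    Odd (dartEdges l ∩ G.edgeCut Y).ncard ↔ ¬(a ∈ Y ↔ b ∈ Y) := by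
  obtain ⟨hw, hnd⟩ := h
  induction l generalizing a with
  | nil => simp [isDartWalk_nil.mp hw]
  | cons d l ih =>
    obtain ⟨rfl, hl⟩ := hw
    obtain ⟨hd, hnd⟩ := List.nodup_cons.mp hnd
    rw [dartEdges_cons]
    by_cases hdY : d.edge ∈ G.edgeCut Y
    · rw [Set.insert_inter_of_mem hdY, Set.ncard_insert_of_notMem (fun hk => hd hk.1)
        ((finite_dartEdges l).inter_of_left _), Nat.odd_add_one, ih hl hnd]
      rw [d.edge_mem_edgeCut_iff] at hdY
      tauto
    · rw [Set.insert_inter_of_notMem hdY, ih hl hnd]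
      rw [d.edge_mem_edgeCut_iff] at hdY
      tauto

end IsDartTrail

end Walks

section Joins

/-- `a` and `b` are joined by a walk all of whose edges lie in `C`. -/
def Joins (G : Grapht V E) (C : Set E) (a b : V) : Prop :=
  ∃ l : List G.Dart, IsDartWalk a l b ∧ dartEdges l ⊆ C

namespace Joins

variable {C C' : Set E} {a b c : V}

theorem refl (C : Set E) (a : V) : G.Joins C a a := ⟨[], rfl, by simp⟩

theorem trans (h : G.Joins C a b) (h' : G.Joins C b c) : G.Joins C a c := by
  obtain ⟨l, hl, hlC⟩ := h
  obtain ⟨m, hm, hmC⟩ := h'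
  exact ⟨l ++ m, hl.append hm, by simpa using ⟨hlC, hmC⟩⟩

theorem symm (h : G.Joins C a b) : G.Joins C b a := by
  obtain ⟨l, hl, hlC⟩ := h
  refine ⟨(l.map Dart.reverse).reverse, hl.reverse, fun k hk => hlC ?_⟩
  simpa [mem_dartEdges, Dart.reverse] using hk

theorem mono (hC : C ⊆ C') (h : G.Joins C a b) : G.Joins C' a b :=
  let ⟨l, hl, hlC⟩ := h
  ⟨l, hl, hlC.trans hC⟩

theorem of_mem_edge {k : E} (hk : k ∈ C) (ha : a ∈ G.I k) (hb : b ∈ G.I k) : G.Joins C a b := by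
  obtain ⟨y, hy⟩ := exists_eq_mk_of_mem_edge ha
  rw [hy, Sym2.mem_iff] at hb
  rcases hb with rfl | rfl
  · exact refl C b
  · exact ⟨[⟨a, k, b, hy⟩], ⟨rfl, rfl⟩, by simpa using hk⟩

end Joins

end Joins

section TPaths

/-- The list of darts `l` traverses a `T`-path from `t` to `q`. -/
structure IsDartTPath (t : V) (l : List G.Dart) (q : V) : Prop where
  isWalk : IsDartWalk t l q
  nodup : (support t l).Nodup
  start_mem : t ∈ G.T
  end_mem : q ∈ G.T
  end_ne : q ≠ t
  eq_or_eq_of_mem : ∀ v ∈ support t l, v ∈ G.T → v = t ∨ v = q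

theorem Joins.exists_isDartTPath {C : Set E} {p q : V} (h : G.Joins C p q) (hp : p ∈ G.T)
    (hq : q ∈ G.T) (hqp : q ≠ p) :
    ∃ (l : List G.Dart) (q' : V), IsDartTPath p l q' ∧ dartEdges l ⊆ C := by
  obtain ⟨m, hm, hmC⟩ := h
  obtain ⟨l, hlm, hl, hnd⟩ := hm.exists_path
  have hlC := (dartEdges_mono hlm).trans hmC
  obtain ⟨l₁, d, l₂, rfl, hl₁, -, hd⟩ := hl.exists_exit (X := {v | v ∈ G.T → v = p})
    (fun _ => rfl) ⟨q, hl.end_mem_support, fun h => hqp (h hq)⟩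
  obtain ⟨hdT, hdp⟩ : d.tgt ∈ G.T ∧ d.tgt ≠ p := by simpa using hd
  have hsupp : support p (l₁ ++ [d]) = support p l₁ ++ [d.tgt] := by simp [support]
  refine ⟨l₁ ++ [d], d.tgt, ⟨hl.split_at.1.append ⟨rfl, rfl⟩, ?_, hp, hdT, hdp, ?_⟩, ?_⟩
  · refine hnd.sublist (List.Sublist.cons_cons _ (List.Sublist.map _ ?_))
    exact (List.Sublist.refl l₁).append ((List.nil_sublist l₂).cons_cons d)
  · intro v hv hvT
    rw [hsupp, List.mem_append, List.mem_singleton] at hv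
    exact hv.imp_left fun h => hl₁ v h hvT
  · exact (dartEdges_mono fun x hx => by simp at hx ⊢; tauto).trans hlC

theorem support_reverse {a b : V} {l : List G.Dart} (h : IsDartWalk a l b) :
    support b (l.map Dart.reverse).reverse = (support a l).reverse := by
  induction l generalizing a with
  | nil => rw [isDartWalk_nil.mp h]; rfl
  | cons d l ih =>
    obtain ⟨rfl, hl⟩ := h
    rw [support_cons, List.reverse_cons, ← ih hl]
    simp [support, Dart.reverse]

theorem dartEdges_reverse (l : List G.Dart) :
    dartEdges (l.map Dart.reverse).reverse = dartEdges l := by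
  ext k
  simp [mem_dartEdges, Dart.reverse]

theorem IsDartTPath.reverse {t q : V} {l : List G.Dart} (h : IsDartTPath t l q) :
    IsDartTPath q (l.map Dart.reverse).reverse t where
  isWalk := h.isWalk.reverse
  nodup := by
    rw [support_reverse h.isWalk]
    exact List.nodup_reverse.mpr h.nodup
  start_mem := h.end_mem
  end_mem := h.start_mem
  end_ne := h.end_ne.symm
  eq_or_eq_of_mem v hv hvT := by
    rw [support_reverse h.isWalk, List.mem_reverse] at hv
    exact (h.eq_or_eq_of_mem v hv hvT).symm

theorem IsDartWalk.eq_of_mem_start {a b : V} {l : List G.Dart} (h : IsDartWalk a l b)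
    (hnd : (support a l).Nodup) {k k' : E} (hk : k ∈ dartEdges l) (hk' : k' ∈ dartEdges l)
    (ha : a ∈ G.I k) (ha' : a ∈ G.I k') : k = k' := by
  cases l with
  | nil => simp at hk
  | cons d l =>
    have heq : ∀ j ∈ dartEdges (d :: l), a ∈ G.I j → j = d.edge := by
      intro j hj haj
      rw [dartEdges_cons] at hj
      exact hj.resolve_right fun hj =>
        (List.nodup_cons.mp hnd).1 (h.2.mem_support_of_mem_edge hj haj)
    rw [heq k hk ha, heq k' hk' ha']

theorem IsDartWalk.isWalk {a b : V} {l : List G.Dart} (h : IsDartWalk a l b) :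
    G.IsWalk (support a l) (l.map Dart.edge) := by
  induction l generalizing a with
  | nil => exact IsWalk.nil a
  | cons d l ih =>
    obtain ⟨rfl, hl⟩ := h
    exact IsWalk.cons d.edge_eq (ih hl)

theorem IsDartWalk.getLast?_support {a b : V} {l : List G.Dart} (h : IsDartWalk a l b) :
    (support a l).getLast? = some b := by
  induction l generalizing a with
  | nil => rw [isDartWalk_nil.mp h]; rfl
  | cons d l ih => exact List.getLast?_cons_cons.trans (ih h.2)

theorem IsWalk.exists_isDartWalk {vs : List V} {es : List E} (h : G.IsWalk vs es) {a b : V}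
    (ha : vs.head? = some a) (hb : vs.getLast? = some b) :
    ∃ l : List G.Dart, IsDartWalk a l b ∧ support a l = vs ∧ l.map Dart.edge = es := by
  induction h generalizing a with
  | nil v =>
    obtain rfl : v = a := by simpa using ha
    exact ⟨[], by simpa using hb, rfl, rfl⟩
  | @cons u w vs e es he _ ih =>
    obtain rfl : u = a := by simpa using ha
    obtain ⟨l, hl, hvs, hes⟩ := ih rfl (List.getLast?_cons_cons.symm.trans hb)
    exact ⟨⟨u, e, w, he⟩ :: l, ⟨rfl, hl⟩, congrArg _ hvs, congrArg _ hes⟩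

theorem Path.verts_eq (P : G.Path) (hne : P.first ≠ P.last) :
    P.verts = P.first :: (P.inner ++ [P.last]) := by
  obtain ⟨vs, hvs⟩ := List.head?_eq_some_iff.mp P.head_eq
  obtain ⟨ws, hws⟩ := List.getLast?_eq_some_iff.mp P.getLast_eq
  cases ws with
  | nil => simp_all
  | cons w ws =>
    obtain ⟨rfl, rfl⟩ : P.first = w ∧ vs = ws ++ [P.last] := by simpa [hws] using hvs.symm
    simp [Path.inner, hws]

theorem isTPath_iff (P : G.Path) : G.IsTPath P ↔ P.first ∈ G.T ∧ P.last ∈ G.T ∧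
    P.first ≠ P.last ∧ ∀ v ∈ P.verts, v ∈ G.T → v = P.first ∨ v = P.last := by
  refine and_congr_right fun _ => and_congr_right fun _ => and_congr_right fun hne => ?_
  have hnd := P.nodup
  rw [P.verts_eq hne] at hnd ⊢
  simp only [List.nodup_cons, List.nodup_append, List.mem_append, List.mem_singleton] at hnd
  simp only [List.mem_cons, List.mem_append, List.not_mem_nil, or_false]
  grind

theorem IsTPath.exists_isDartTPath {P : G.Path} (hP : G.IsTPath P) :
    ∃ l : List G.Dart, IsDartTPath P.first l P.last ∧ dartEdges l = P.edgeSet := by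
  obtain ⟨l, hl, hvs, hes⟩ := P.isWalk.exists_isDartWalk P.head_eq P.getLast_eq
  obtain ⟨hf, hlast, hne, hT⟩ := (isTPath_iff P).mp hP
  exact ⟨l, ⟨hl, hvs ▸ P.nodup, hf, hlast, hne.symm, hvs ▸ hT⟩, by
    simp only [dartEdges, hes, Path.edgeSet]⟩

theorem IsTPath.exists_isDartTPath_of_mem {P : G.Path} (hP : G.IsTPath P) {t : V} {e : E}
    (he : e ∈ P.edgeSet) (ht : t ∈ G.T) (hte : t ∈ G.I e) :
    ∃ (l : List G.Dart) (q : V), IsDartTPath t l q ∧ dartEdges l = P.edgeSet := by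
  obtain ⟨l, hl, hle⟩ := hP.exists_isDartTPath
  rcases hl.eq_or_eq_of_mem t (hl.isWalk.mem_support_of_mem_edge (hle ▸ he) hte) ht with rfl | rfl
  · exact ⟨l, _, hl, hle⟩
  · exact ⟨_, _, hl.reverse, (dartEdges_reverse l).trans hle⟩

theorem IsTPath.eq_of_mem_terminal {P : G.Path} (hP : G.IsTPath P) {t : V} (ht : t ∈ G.T)
    {k k' : E} (hk : k ∈ P.edgeSet) (hk' : k' ∈ P.edgeSet) (htk : t ∈ G.I k) (htk' : t ∈ G.I k') :
    k = k' := by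
  obtain ⟨l, q, hl, hle⟩ := hP.exists_isDartTPath_of_mem hk ht htk
  exact hl.isWalk.eq_of_mem_start hl.nodup (hle ▸ hk) (hle ▸ hk') htk htk'

theorem IsDartTPath.exists_isTPath {t q : V} {l : List G.Dart} (h : IsDartTPath t l q) :
    ∃ P : G.Path, G.IsTPath P ∧ P.edgeSet = dartEdges l := by
  refine ⟨⟨t, q, support t l, l.map Dart.edge, h.isWalk.isWalk, h.nodup, rfl,
    h.isWalk.getLast?_support⟩, (isTPath_iff _).mpr ?_, rfl⟩
  exact ⟨h.start_mem, h.end_mem, h.end_ne.symm, h.eq_or_eq_of_mem⟩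

theorem IsWalk.exists_restrict {H : Set E} {vs : List V} {es : List E} (h : G.IsWalk vs es)
    (hH : ∀ k ∈ es, k ∈ H) :
    ∃ es' : List H, (G.restrict H).IsWalk vs es' ∧ es'.map Subtype.val = es := by
  induction h with
  | nil v => exact ⟨[], IsWalk.nil v, rfl⟩
  | cons he _ ih =>
    obtain ⟨es', hes', rfl⟩ := ih fun k hk => hH k (List.mem_cons_of_mem _ hk)
    exact ⟨⟨_, hH _ List.mem_cons_self⟩ :: es', IsWalk.cons he hes', rfl⟩

theorem IsTPath.exists_restrict {H : Set E} {P : G.Path} (hP : G.IsTPath P)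
    (hPH : P.edgeSet ⊆ H) : ∃ P' : (G.restrict H).Path, (G.restrict H).IsTPath P' ∧
      ∀ k : H, k ∈ P'.edges ↔ (k : E) ∈ P.edgeSet := by
  obtain ⟨es, hes, hval⟩ := P.isWalk.exists_restrict hPH
  refine ⟨⟨P.first, P.last, P.verts, es, hes, P.nodup, P.head_eq, P.getLast_eq⟩, hP, fun k => ?_⟩
  simp [Path.edgeSet, ← hval]

end TPaths

section Fans

variable {H H' : Set E} {p : V}

/-- A trail from `p` to another vertex that stays in the edge set `H` and has `g` as its only
edge at `p`. -/
structure IsSpoke (H : Set E) (p : V) (g : E) (l : List G.Dart) (z : V) : Prop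
    extends IsDartTrail p l z where
  end_ne : z ≠ p
  subset : dartEdges l ⊆ H
  eq_of_mem : ∀ k ∈ dartEdges l, p ∈ G.I k → k = g

namespace IsSpoke

variable {g : E} {l m : List G.Dart} {z w : V}

theorem exists_start_dart (h : IsSpoke H p g l z) : ∃ d ∈ l, d.edge = g ∧ d.src = p := by
  obtain ⟨d, hd, hsrc⟩ := h.isWalk.exists_start_dart h.end_ne
  exact ⟨d, hd, h.eq_of_mem _ (edge_mem_dartEdges hd) (hsrc ▸ d.src_mem), hsrc⟩

theorem mem_dartEdges (h : IsSpoke H p g l z) : g ∈ dartEdges l := by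
  obtain ⟨d, hd, rfl, -⟩ := h.exists_start_dart
  exact edge_mem_dartEdges hd

theorem transfer (h : IsSpoke H p g l z) (hl : dartEdges l ⊆ H') : IsSpoke H' p g l z where
  toIsDartTrail := h.toIsDartTrail
  end_ne := h.end_ne
  subset := hl
  eq_of_mem := h.eq_of_mem

theorem append (hl : IsSpoke H p g l z) (hm : IsDartTrail z m w)
    (hd : Disjoint (dartEdges l) (dartEdges m)) (hmH : dartEdges m ⊆ H)
    (hmp : ∀ k ∈ dartEdges m, p ∉ G.I k) : IsSpoke H p g (l ++ m) w where
  toIsDartTrail := hl.toIsDartTrail.append hm hd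
  end_ne hwp := by
    obtain ⟨k, hk, hpk⟩ := IsDartWalk.exists_mem_edge_of_mem_support
      (hwp ▸ hm.isWalk.end_mem_support) hl.end_ne.symm
    exact hmp k hk hpk
  subset := by simpa using ⟨hl.subset, hmH⟩
  eq_of_mem k hk hpk := by
    rw [dartEdges_append] at hk
    exact hk.elim (hl.eq_of_mem k · hpk) fun hk => absurd hpk (hmp k hk)

theorem initial (h : IsSpoke H p g (l ++ m) z) (hl : IsDartWalk p l w) (hw : w ≠ p) :
    IsSpoke H p g l w where
  toIsDartTrail := (h.toIsDartTrail.split hl).1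
  end_ne := hw
  subset := (dartEdges_mono (List.subset_append_left l m)).trans h.subset
  eq_of_mem k hk := h.eq_of_mem k (dartEdges_mono (List.subset_append_left l m) hk)

end IsSpoke

theorem Joins.exists_isSpoke {C : Set E} {g : E} {q : V} (h : G.Joins C p q) (hqp : q ≠ p)
    (hCp : ∀ k ∈ C, p ∈ G.I k → k = g) : ∃ l : List G.Dart, IsSpoke C p g l q := by
  obtain ⟨m, hm, hmC⟩ := h
  obtain ⟨l, hlm, hl, hnd⟩ := hm.exists_path
  have hlC := (dartEdges_mono hlm).trans hmC
  exact ⟨l, hl.isDartTrail hnd, hqp, hlC, fun k hk => hCp k (hlC hk)⟩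

/-- Edge-disjoint spokes at `p` in the edge set `H`, the spoke `S g` starting with `g` and ending
in `z g` for each `g ∈ D`. The values of `S` and `z` outside `D` are irrelevant. -/
structure IsFan (H : Set E) (p : V) (D : Set E) (S : E → List G.Dart) (z : E → V) : Prop where
  isSpoke : ∀ g ∈ D, IsSpoke H p g (S g) (z g)
  disjoint : D.PairwiseDisjoint fun g => dartEdges (S g)

/-- A fan all of whose spokes end in terminals. -/
structure IsLinkage (H : Set E) (p : V) (D : Set E) (S : E → List G.Dart) (z : E → V) : Prop
    extends IsFan H p D S z where
  end_mem : ∀ g ∈ D, z g ∈ G.T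

/-- There are edge-disjoint trails in the edge set `H` from `p` to other terminals, one for each
edge `g ∈ D`, which has `g` as its only edge at `p`. -/
def LinkedOn (G : Grapht V E) (H : Set E) (p : V) (D : Set E) : Prop :=
  ∃ (S : E → List G.Dart) (z : E → V), IsLinkage H p D S z

/-- The vertex `p` is linked in the subgraph with edge set `H`. -/
def LinkedIn (G : Grapht V E) (H : Set E) (p : V) : Prop :=
  G.LinkedOn H p (G.edgeCut {p} ∩ H)

namespace IsFan

variable {D D' : Set E} {S : E → List G.Dart} {z : E → V}

theorem eq_of_mem (h : IsFan H p D S z) {g g' k : E} (hg : g ∈ D) (hg' : g' ∈ D)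
    (hk : k ∈ dartEdges (S g)) (hk' : k ∈ dartEdges (S g')) : g = g' :=
  h.disjoint.elim hg hg' (Set.not_disjoint_iff.mpr ⟨k, hk, hk'⟩)

theorem mono (hD : D' ⊆ D) (h : IsFan H p D S z) : IsFan H p D' S z :=
  ⟨fun g hg => h.isSpoke g (hD hg), h.disjoint.subset hD⟩

theorem transfer (h : IsFan H p D S z) (hH : ∀ g ∈ D, dartEdges (S g) ⊆ H') :
    IsFan H' p D S z :=
  ⟨fun g hg => (h.isSpoke g hg).transfer (hH g hg), h.disjoint⟩

theorem diff {F : Set E} {g : E} (h : IsFan H p D S z) (hg : g ∈ D)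
    (hF : F ⊆ dartEdges (S g)) : IsFan (H \ F) p (D \ {g}) S z :=
  (h.mono Set.sdiff_subset).transfer fun _ hg' _ hk =>
    ⟨(h.isSpoke _ hg'.1).subset hk, fun hkF => hg'.2 (h.eq_of_mem hg'.1 hg hk (hF hkF))⟩

open Classical in
theorem insert {a : E} {l : List G.Dart} {w : V} (h : IsFan H p (D \ {a}) S z)
    (hl : IsSpoke H p a l w)
    (hd : ∀ g ∈ D, g ≠ a → Disjoint (dartEdges l) (dartEdges (S g))) :
    IsFan H p D (Function.update S a l) (Function.update z a w) where
  isSpoke g hg := by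
    by_cases hga : g = a
    · subst hga
      simpa using hl
    · simpa [hga] using h.isSpoke g ⟨hg, hga⟩
  disjoint g hg g' hg' hne := by
    simp only [Function.onFun, Function.update_apply]
    split_ifs with hga hga' hga'
    · exact absurd (hga.trans hga'.symm) hne
    · exact hd g' hg' hga'
    · exact (hd g hg hga).symm
    · exact h.disjoint ⟨hg, hga⟩ ⟨hg', hga'⟩ hne

end IsFan

theorem LinkedOn.mono {D D' : Set E} (hH : H ⊆ H') (hD : D' ⊆ D)
    (h : G.LinkedOn H p D) : G.LinkedOn H' p D' :=
  let ⟨S, z, hS⟩ := h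
  ⟨S, z, (hS.toIsFan.mono hD).transfer fun g hg => (hS.isSpoke g (hD hg)).subset.trans hH,
    fun g hg => hS.end_mem g (hD hg)⟩

theorem linkedOn_of_joins {D : Set E} {C : E → Set E}
    (hjoins : ∀ g ∈ D, ∃ q ∈ G.T, q ≠ p ∧ G.Joins (C g) p q) (hsub : ∀ g ∈ D, C g ⊆ H)
    (hstar : ∀ g ∈ D, ∀ k ∈ C g, p ∈ G.I k → k = g) (hdisj : D.PairwiseDisjoint C) :
    G.LinkedOn H p D := by
  have hspoke : ∀ g, ∃ (l : List G.Dart) (q : V), g ∈ D → q ∈ G.T ∧ IsSpoke (C g) p g l q := by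
    intro g
    by_cases hg : g ∈ D
    · obtain ⟨q, hqT, hqp, hq⟩ := hjoins g hg
      obtain ⟨l, hl⟩ := hq.exists_isSpoke hqp (hstar g hg)
      exact ⟨l, q, fun _ => ⟨hqT, hl⟩⟩
    · exact ⟨[], p, fun hg' => absurd hg' hg⟩
  choose S z hS using hspoke
  refine ⟨S, z, ⟨fun g hg => (hS g hg).2.transfer ((hS g hg).2.subset.trans (hsub g hg)), ?_⟩,
    fun g hg => (hS g hg).1⟩
  exact fun g hg g' hg' hne =>
    (hdisj hg hg' hne).mono (hS g hg).2.subset (hS g' hg').2.subset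

theorem linkedIn_univ_of_linked (hp : p ∈ G.T) (h : G.Linked p) : G.LinkedIn Set.univ p := by
  obtain ⟨Ps, ⟨hdisj, hPs⟩, hcov⟩ := h
  rw [LinkedIn, Set.inter_univ]
  refine linkedOn_of_joins (C := fun g => {k | ∃ P ∈ Ps, g ∈ P.edges ∧ k ∈ P.edges})
    (fun g hg => ?_) (fun _ _ => Set.subset_univ _) ?_ fun g hg g' hg' hne => ?_
  · obtain ⟨P, hP, hgP⟩ := hcov g hg
    obtain ⟨l, q, hl, hle⟩ :=
      (hPs P hP).exists_isDartTPath_of_mem hgP hp (mem_edgeCut_singleton.mp hg)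
    exact ⟨q, hl.end_mem, hl.end_ne, l, hl.isWalk, hle.subset.trans fun k hk => ⟨P, hP, hgP, hk⟩⟩
  · rintro g hg k ⟨P, hP, hgP, hkP⟩ hpk
    exact (hPs P hP).eq_of_mem_terminal hp hkP hgP hpk (mem_edgeCut_singleton.mp hg)
  · refine Set.disjoint_left.mpr ?_
    rintro k ⟨P, hP, hgP, hkP⟩ ⟨P', hP', hgP', hkP'⟩
    obtain rfl : P = P' := by_contra fun hPP => hdisj hP hP' hPP k hkP hkP'
    exact hne ((hPs P hP).eq_of_mem_terminal hp hgP hgP' (mem_edgeCut_singleton.mp hg)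
      (mem_edgeCut_singleton.mp hg'))

theorem IsSpoke.exists_isTPath_restrict {g : H} {l : List G.Dart} {z : V}
    (h : IsSpoke H p g l z) (hp : p ∈ G.T) (hz : z ∈ G.T) :
    ∃ P : (G.restrict H).Path, (G.restrict H).IsTPath P ∧ g ∈ P.edges ∧
      ∀ k ∈ P.edges, (k : E) ∈ dartEdges l := by
  obtain ⟨m, q, hm, hml⟩ := Joins.exists_isDartTPath ⟨l, h.isWalk, subset_rfl⟩ hp hz h.end_ne
  obtain ⟨P, hP, hPm⟩ := hm.exists_isTPath
  obtain ⟨P', hP', hmem⟩ := hP.exists_restrict (hPm ▸ hml.trans h.subset)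
  obtain ⟨d, hd, hdp⟩ := hm.isWalk.exists_start_dart hm.end_ne
  have hdm := edge_mem_dartEdges hd
  have hdg : d.edge = g := h.eq_of_mem _ (hml hdm) (hdp ▸ d.src_mem)
  exact ⟨P', hP', (hmem g).mpr (hPm ▸ hdg ▸ hdm), fun k hk => hml (hPm ▸ (hmem k).mp hk)⟩

theorem linked_restrict_of_linkedIn (hp : p ∈ G.T) (h : G.LinkedIn H p) :
    (G.restrict H).Linked p := by
  obtain ⟨S, z, hS⟩ := h
  have hD : ∀ g ∈ (G.restrict H).edgeCut {p}, (g : E) ∈ G.edgeCut {p} ∩ H :=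
    fun g hg => ⟨hg, g.2⟩
  choose P hP hgP hPS using fun (g : H) (hg : g ∈ (G.restrict H).edgeCut {p}) =>
    (hS.isSpoke g (hD g hg)).exists_isTPath_restrict hp (hS.end_mem g (hD g hg))
  refine ⟨{Q | ∃ g hg, Q = P g hg}, ⟨?_, ?_⟩, fun g hg => ⟨P g hg, ⟨g, hg, rfl⟩, hgP g hg⟩⟩
  · rintro _ ⟨g, hg, rfl⟩ _ ⟨g', hg', rfl⟩ hne k hk hk'
    obtain rfl : g = g' := Subtype.ext <|
      hS.eq_of_mem (hD g hg) (hD g' hg') (hPS g hg k hk) (hPS g' hg' k hk')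
    exact hne rfl
  · rintro _ ⟨g, hg, rfl⟩
    exact hP g hg

end Fans

section InnerEulerian

/-- The subgraph with edge set `H` is inner Eulerian. -/
def InnerEulerianOn (G : Grapht V E) (H : Set E) : Prop :=
  ∀ X : Set V, Disjoint X G.T → ¬((G.edgeCut X ∩ H).Finite ∧ Odd (G.edgeCut X ∩ H).ncard)

theorem InnerEulerianOn.innerEulerian_restrict {H : Set E} (h : G.InnerEulerianOn H) :
    (G.restrict H).InnerEulerian := by
  rintro X hX ⟨hfin, hodd⟩
  have himage : (fun k : H => (k : E)) '' (G.restrict H).edgeCut X = G.edgeCut X ∩ H := by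
    ext k
    simp [edgeCut, restrict, and_comm]
  refine h X hX ⟨himage ▸ hfin.image _, ?_⟩
  rwa [← himage, Set.ncard_image_of_injective _ Subtype.val_injective]

theorem InnerEulerian.innerEulerianOn_compl (h : G.InnerEulerian) {a b : V} {l : List G.Dart}
    (hl : IsDartTrail a l b) (ha : a ∈ G.T) (hb : b ∈ G.T) :
    G.InnerEulerianOn (dartEdges l)ᶜ := by
  rintro X hX ⟨hfin, hodd⟩
  rw [← Set.sdiff_eq] at hfin hodd
  have hfinX : (G.edgeCut X).Finite :=
    (hfin.union (finite_dartEdges l)).subset fun k hk => by by_cases k ∈ dartEdges l <;> simp_all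
  have heven : ¬Odd (dartEdges l ∩ G.edgeCut X).ncard := by
    rw [hl.odd_ncard_inter_edgeCut_iff]
    simp [Set.disjoint_right.mp hX ha, Set.disjoint_right.mp hX hb]
  rw [Set.inter_comm] at heven
  refine h X hX ⟨hfinX, ?_⟩
  rw [← Set.ncard_inter_add_ncard_sdiff_eq_ncard _ (dartEdges l) hfinX, Nat.odd_add]
  exact iff_of_false heven (Nat.not_even_iff_odd.mpr hodd)

end InnerEulerian

section NearLinkages

variable {H : Set E} {p : V}

/-- A fan in `H` with a spoke for every edge of `H` at `p`, all of whose spokes except possibly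
the one starting with the edge `gap` end in terminals. -/
structure NearLinkage (G : Grapht V E) (H : Set E) (p : V) where
  trail : E → List G.Dart
  endpt : E → V
  gap : E
  gap_mem : gap ∈ G.edgeCut {p} ∩ H
  isFan : IsFan H p (G.edgeCut {p} ∩ H) trail endpt
  end_mem : ∀ g ∈ G.edgeCut {p} ∩ H, g ≠ gap → endpt g ∈ G.T

namespace NearLinkage

variable (N : G.NearLinkage H p)

/-- The vertex in which the deficient spoke ends. -/
def tip : V := N.endpt N.gap

/-- The edges used by the spokes. -/
def used : Set E := {k | ∃ g ∈ G.edgeCut {p} ∩ H, k ∈ dartEdges (N.trail g)}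

/-- The darts used by the spokes, oriented away from `p`. -/
def darts : Set G.Dart := {d | ∃ g ∈ G.edgeCut {p} ∩ H, d ∈ N.trail g}

theorem isSpoke_gap : IsSpoke H p N.gap (N.trail N.gap) N.tip := N.isFan.isSpoke _ N.gap_mem

theorem disjoint_of_ne {g g' : E} (hg : g ∈ G.edgeCut {p} ∩ H) (hg' : g' ∈ G.edgeCut {p} ∩ H)
    (hne : g ≠ g') : Disjoint (dartEdges (N.trail g)) (dartEdges (N.trail g')) :=
  N.isFan.disjoint hg hg' hne

theorem linkedIn_of_tip_mem (h : N.tip ∈ G.T) : G.LinkedIn H p := by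
  refine ⟨N.trail, N.endpt, N.isFan, fun g hg => ?_⟩
  rcases eq_or_ne g N.gap with rfl | hne
  · exact h
  · exact N.end_mem g hg hne

open Classical in
/-- The deficient spoke is replaced by another one with the same first edge. -/
noncomputable def replaceGap {l : List G.Dart} {w : V} (hl : IsSpoke H p N.gap l w)
    (hd : ∀ g ∈ G.edgeCut {p} ∩ H, g ≠ N.gap → Disjoint (dartEdges l) (dartEdges (N.trail g))) :
    G.NearLinkage H p where
  trail := Function.update N.trail N.gap l
  endpt := Function.update N.endpt N.gap w
  gap := N.gap
  gap_mem := N.gap_mem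
  isFan := (N.isFan.mono Set.sdiff_subset).insert hl hd
  end_mem g hg hne := by simpa [hne] using N.end_mem g hg hne

theorem not_mem_of_not_mem_used {k : E} (hk : k ∈ H \ N.used) : p ∉ G.I k := fun hpk =>
  have hkD : k ∈ G.edgeCut {p} ∩ H := ⟨mem_edgeCut_singleton.mpr hpk, hk.1⟩
  hk.2 ⟨k, hkD, (N.isFan.isSpoke k hkD).mem_dartEdges⟩

/-- The deficient spoke is prolonged by a trail of unused edges. -/
noncomputable def extend {m : List G.Dart} {w : V} (hm : IsDartTrail N.tip m w)
    (hmU : dartEdges m ⊆ H \ N.used) : G.NearLinkage H p :=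
  have hused : ∀ g ∈ G.edgeCut {p} ∩ H, Disjoint (dartEdges (N.trail g)) (dartEdges m) :=
    fun g hg => Set.disjoint_right.mpr fun _ hk hkg => (hmU hk).2 ⟨g, hg, hkg⟩
  N.replaceGap
    (N.isSpoke_gap.append hm (hused _ N.gap_mem) (hmU.trans Set.sdiff_subset)
      fun _ hk => N.not_mem_of_not_mem_used (hmU hk))
    fun g hg hne => by
      rw [dartEdges_append]
      exact (N.disjoint_of_ne hg N.gap_mem hne).symm.union_left (hused g hg).symm

open Classical in
/-- The spoke `l₁ ++ l₂` at `g` passes through the tip. Its second part is moved to the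
deficient spoke, so that the spoke at `g` becomes the deficient one. -/
noncomputable def swap {g : E} {l₁ l₂ : List G.Dart} (hg : g ∈ G.edgeCut {p} ∩ H)
    (hne : g ≠ N.gap) (hsplit : N.trail g = l₁ ++ l₂) (hl₁ : IsDartWalk p l₁ N.tip) :
    G.NearLinkage H p where
  trail := Function.update (Function.update N.trail N.gap (N.trail N.gap ++ l₂)) g l₁
  endpt := Function.update (Function.update N.endpt N.gap (N.endpt g)) g N.tip
  gap := g
  gap_mem := hg
  isFan := by
    have hspoke : IsSpoke H p g (l₁ ++ l₂) (N.endpt g) := hsplit ▸ N.isFan.isSpoke g hg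
    have hspoke₁ := hspoke.initial hl₁ N.isSpoke_gap.end_ne
    obtain ⟨-, htrail₂, hdisj⟩ := hspoke.toIsDartTrail.split hl₁
    have hsub : ∀ g' ∈ G.edgeCut {p} ∩ H, g' ≠ g →
        Disjoint (dartEdges l₁) (dartEdges (N.trail g')) ∧
          Disjoint (dartEdges l₂) (dartEdges (N.trail g')) := by
      intro g' hg' hne'
      rw [← Set.disjoint_union_left, ← dartEdges_append, ← hsplit]
      exact N.disjoint_of_ne hg hg' hne'.symm
    have hH : dartEdges l₂ ⊆ H :=
      (dartEdges_mono (List.subset_append_right _ _)).trans hspoke.subset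
    have hgap : IsSpoke H p N.gap (N.trail N.gap ++ l₂) (N.endpt g) := by
      refine N.isSpoke_gap.append htrail₂ (hsub _ N.gap_mem hne.symm).2.symm hH fun k hk hpk => ?_
      obtain rfl := hspoke.eq_of_mem k (dartEdges_mono (List.subset_append_right _ _) hk) hpk
      exact Set.disjoint_left.mp hdisj hspoke₁.mem_dartEdges hk
    refine IsFan.insert ((N.isFan.mono ?_).insert hgap fun g' hg' hne' => ?_) hspoke₁
      fun g' hg' hne' => ?_
    · exact Set.sdiff_subset.trans Set.sdiff_subset
    · rw [dartEdges_append]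
      exact (N.disjoint_of_ne N.gap_mem hg'.1 hne'.symm).union_left (hsub g' hg'.1 hg'.2).2
    · rcases eq_or_ne g' N.gap with rfl | hgap'
      · simpa using ⟨(hsub _ hg' hne').1, hdisj⟩
      · simpa [hgap'] using (hsub g' hg' hne').1
  end_mem g' hg' hne' := by
    rcases eq_or_ne g' N.gap with rfl | hgap'
    · simpa [hne'] using N.end_mem g hg hne
    · simpa [hne', hgap'] using N.end_mem g' hg' hgap'

end NearLinkage

end NearLinkages

section Shifting

variable {H : Set E} {p : V}

theorem odd_ncard_biUnion_of_existsUnique {ι α : Type*} {A : Set ι} {f : ι → Set α}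
    (hA : A.Finite) (hf : ∀ i ∈ A, (f i).Finite) (hdisj : A.PairwiseDisjoint f)
    (hodd : ∃! i, i ∈ A ∧ Odd (f i).ncard) : Odd (⋃ i ∈ A, f i).ncard := by
  classical
  rw [hA.ncard_biUnion hf hdisj, finsum_mem_eq_finite_toFinset_sum _ hA,
    Finset.odd_sum_iff_odd_card_odd]
  obtain ⟨i, hi, huniq⟩ := hodd
  have hfilter : {j ∈ hA.toFinset | Odd (f j).ncard} = {i} := by
    ext j
    simp only [Finset.mem_filter, Set.Finite.mem_toFinset, Finset.mem_singleton]
    exact ⟨huniq j, fun h => h ▸ hi⟩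
  rw [hfilter, Finset.card_singleton]
  exact odd_one

open Classical in
theorem exists_seq_injective_of_forall_exists_notMem {α β : Type*} (c : α → β)
    (r : α → α → Prop) (h : ∀ (x : α) (J : Finset β), ∃ y, c y ∉ J ∧ r x y) (x : α) :
    ∃ f : ℕ → α, (∀ n, r (f n) (f (n + 1))) ∧ Function.Injective (c ∘ f) := by
  choose next hnext hr using h
  let s : ℕ → α × Finset β := fun n =>
    n.rec (x, ∅) fun _ s => (next s.1 (insert (c s.1) s.2), insert (c s.1) s.2)
  have hseen : ∀ n, ∀ m < n, c (s m).1 ∈ (s n).2 := by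
    intro n
    induction n with
    | zero => simp
    | succ n ih =>
      intro m hm
      rcases (Nat.lt_succ_iff_lt_or_eq.mp hm) with hm | rfl
      · exact Finset.mem_insert_of_mem (ih m hm)
      · exact Finset.mem_insert_self _ _
  have hfresh : ∀ n, c (s n).1 ∉ (s n).2 := by
    rintro (_ | n)
    · exact Finset.notMem_empty _
    · exact hnext _ _
  refine ⟨fun n => (s n).1, fun n => hr _ _, .of_lt_imp_ne fun m n hmn heq => ?_⟩
  have hgap : c (s m).1 = c (s n).1 := heq
  exact hfresh n (hgap ▸ hseen n m hmn)

namespace NearLinkage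

variable (N : G.NearLinkage H p)

/-- Two near linkages agree except for the spokes at their two gaps. -/
def AgreesOff (N N' : G.NearLinkage H p) : Prop :=
  ∀ g, g ≠ N.gap → g ≠ N'.gap → N'.trail g = N.trail g ∧ N'.endpt g = N.endpt g

variable {N} in
theorem exists_trail_of_joins {v : V} (h : G.Joins (H \ N.used) N.tip v) :
    ∃ m : List G.Dart, IsDartTrail N.tip m v ∧ dartEdges m ⊆ H \ N.used := by
  obtain ⟨l, hl, hlU⟩ := h
  obtain ⟨m, hml, hm, hnd⟩ := hl.exists_path
  exact ⟨m, hm.isDartTrail hnd, (dartEdges_mono hml).trans hlU⟩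

theorem linkedIn_of_joins {q : V} (hq : q ∈ G.T) (h : G.Joins (H \ N.used) N.tip q) :
    G.LinkedIn H p := by
  obtain ⟨m, hm, hmU⟩ := exists_trail_of_joins h
  refine (N.extend hm hmU).linkedIn_of_tip_mem ?_
  simpa [tip, extend, replaceGap] using hq

/-- The component of the tip in the subgraph of the unused edges of `H`. -/
def component : Set V := {v | G.Joins (H \ N.used) N.tip v}

theorem edgeCut_component_inter_eq : G.edgeCut N.component ∩ H =
    ⋃ g ∈ G.edgeCut {p} ∩ H, dartEdges (N.trail g) ∩ G.edgeCut N.component := by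
  ext k
  simp only [Set.mem_inter_iff, Set.mem_iUnion, exists_prop]
  refine ⟨fun ⟨hkK, hkH⟩ => ?_, fun ⟨g, hg, hkg, hkK⟩ => ⟨hkK, (N.isFan.isSpoke g hg).subset hkg⟩⟩
  by_contra hk
  obtain ⟨d, rfl, hsrc, htgt⟩ := Dart.exists_outward hkK
  have hunused : d.edge ∈ H \ N.used := ⟨hkH, fun ⟨g, hg, hkg⟩ => hk ⟨g, hg, hkg, hkK⟩⟩
  exact htgt (hsrc.trans (Joins.of_mem_edge hunused d.src_mem d.tgt_mem))

/-- If only finitely many spokes met the component of the tip, its cut would be odd: the deficient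
spoke crosses it an odd number of times and every other spoke an even number of times. -/
theorem infinite_setOf_meets_component (hE : G.InnerEulerianOn H) (hp : p ∈ G.T)
    (hK : ∀ q ∈ G.T, q ∉ N.component) :
    {g ∈ G.edgeCut {p} ∩ H |
      (dartEdges (N.trail g) ∩ G.edgeCut N.component).Nonempty}.Infinite := by
  set K := N.component
  set A := {g ∈ G.edgeCut {p} ∩ H | (dartEdges (N.trail g) ∩ G.edgeCut K).Nonempty}
  intro hA
  have hodd_iff : ∀ g ∈ G.edgeCut {p} ∩ H,
      (Odd (dartEdges (N.trail g) ∩ G.edgeCut K).ncard ↔ g = N.gap) := by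
    intro g hg
    rw [(N.isFan.isSpoke g hg).odd_ncard_inter_edgeCut_iff]
    simp only [hK p hp, false_iff, not_not]
    refine ⟨fun hgK => by_contra fun hne => hK _ (N.end_mem g hg hne) hgK, ?_⟩
    rintro rfl
    exact Joins.refl _ _
  have hcut : G.edgeCut K ∩ H = ⋃ g ∈ A, dartEdges (N.trail g) ∩ G.edgeCut K := by
    rw [N.edgeCut_component_inter_eq]
    ext k
    simp only [Set.mem_iUnion, exists_prop]
    exact ⟨fun ⟨g, hg, hk⟩ => ⟨g, ⟨hg, k, hk⟩, hk⟩, fun ⟨g, hg, hk⟩ => ⟨g, hg.1, hk⟩⟩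
  have hfin : ∀ g ∈ A, (dartEdges (N.trail g) ∩ G.edgeCut K).Finite :=
    fun g _ => (finite_dartEdges _).inter_of_left _
  refine hE K (Set.disjoint_right.mpr hK) ⟨hcut ▸ hA.biUnion hfin, ?_⟩
  rw [hcut]
  refine odd_ncard_biUnion_of_existsUnique hA hfin (fun g hg g' hg' hne => ?_)
    ⟨N.gap, ⟨⟨N.gap_mem, ?_⟩, (hodd_iff _ N.gap_mem).mpr rfl⟩,
      fun g hg => (hodd_iff g hg.1.1).mp hg.2⟩
  · exact (N.disjoint_of_ne hg.1 hg'.1 hne).mono Set.inter_subset_left Set.inter_subset_left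
  · exact Set.nonempty_of_ncard_ne_zero ((hodd_iff _ N.gap_mem).mpr rfl).pos.ne'

theorem exists_agreesOff (hE : G.InnerEulerianOn H) (hp : p ∈ G.T) (hN : ¬G.LinkedIn H p)
    (J : Finset E) : ∃ N' : G.NearLinkage H p, N'.gap ∉ J ∧ N.AgreesOff N' := by
  classical
  have hK : ∀ q ∈ G.T, q ∉ N.component := fun q hq h => hN (N.linkedIn_of_joins hq h)
  obtain ⟨g, ⟨hg, k, hkg, hkK⟩, hgJ⟩ :=
    (N.infinite_setOf_meets_component hE hp hK).exists_notMem_finset (insert N.gap J)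
  obtain ⟨hgap, hgJ⟩ : g ≠ N.gap ∧ g ∉ J := by simpa using hgJ
  obtain ⟨v, hvk, hv⟩ := (mem_edgeCut_iff.mp hkK).1
  have hspoke := N.isFan.isSpoke g hg
  obtain ⟨l₁, l₂, hsplit, hl₁, -⟩ :=
    hspoke.isWalk.exists_split_of_mem_support (hspoke.isWalk.mem_support_of_mem_edge hkg hvk)
  obtain ⟨m, hm, hmU⟩ := exists_trail_of_joins hv
  have htip : (N.extend hm hmU).tip = v := by simp [tip, extend, replaceGap]
  have hsplit' : (N.extend hm hmU).trail g = l₁ ++ l₂ := by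
    simpa [extend, replaceGap, hgap] using hsplit
  refine ⟨(N.extend hm hmU).swap hg hgap hsplit' (htip.symm ▸ hl₁), hgJ, fun g' hne hne' => ?_⟩
  have hne'' : g' ≠ g := hne'
  simp [swap, extend, replaceGap, hne, hne'']

/-- In a sequence of near linkages with distinct gaps, consecutive members of which agree except at
their gaps, each spoke changes at most twice, so the sequence converges pointwise to a linkage. -/
theorem linkedIn_of_seq {f : ℕ → G.NearLinkage H p} (hagree : ∀ n, (f n).AgreesOff (f (n + 1)))
    (hinj : Function.Injective (gap ∘ f)) : G.LinkedIn H p := by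
  have hstable : ∀ g, ∃ n, ∀ m ≥ n,
      (f m).gap ≠ g ∧ (f m).trail g = (f n).trail g ∧ (f m).endpt g = (f n).endpt g := by
    intro g
    obtain ⟨n, hn⟩ : ∃ n, ∀ m ≥ n, (f m).gap ≠ g := by
      by_cases hg : ∃ n, (f n).gap = g
      · obtain ⟨n, rfl⟩ := hg
        exact ⟨n + 1, fun m hm heq => by have := hinj heq; omega⟩
      · exact ⟨0, fun m _ heq => hg ⟨m, heq⟩⟩
    refine ⟨n, fun m hm => ⟨hn m hm, ?_⟩⟩
    induction m, hm using Nat.le_induction with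
    | base => exact ⟨rfl, rfl⟩
    | succ m hm ih =>
      obtain ⟨ht, he⟩ := hagree m g (hn m hm).symm (hn (m + 1) (by omega)).symm
      exact ⟨ht.trans ih.1, he.trans ih.2⟩
  choose n hn using hstable
  refine ⟨fun g => (f (n g)).trail g, fun g => (f (n g)).endpt g, ⟨?_, ?_⟩, ?_⟩
  · exact fun g hg => (f (n g)).isFan.isSpoke g hg
  · intro g hg g' hg' hne
    have hdisj := (f (max (n g) (n g'))).disjoint_of_ne hg hg' hne
    rwa [(hn g _ (le_max_left _ _)).2.1, (hn g' _ (le_max_right _ _)).2.1] at hdisj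
  · exact fun g hg => (f (n g)).end_mem g hg (hn g _ le_rfl).1.symm

theorem linkedIn (N : G.NearLinkage H p) (hE : G.InnerEulerianOn H) (hp : p ∈ G.T) :
    G.LinkedIn H p := by
  by_contra hN
  obtain ⟨f, hagree, hinj⟩ := exists_seq_injective_of_forall_exists_notMem gap AgreesOff
    (fun N J => N.exists_agreesOff hE hp hN J) N
  exact hN (linkedIn_of_seq hagree hinj)

end NearLinkage

open Classical in
theorem LinkedOn.linkedIn_of_diff_singleton {a : E} (hE : G.InnerEulerianOn H) (hp : p ∈ G.T)
    (h : G.LinkedOn H p ((G.edgeCut {p} ∩ H) \ {a})) : G.LinkedIn H p := by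
  by_cases ha : a ∈ G.edgeCut {p} ∩ H
  swap
  · rwa [Set.sdiff_singleton_eq_self ha] at h
  obtain ⟨S, z, hS⟩ := h
  have hpa := mem_edgeCut_singleton.mp ha.1
  obtain ⟨y, hy⟩ := exists_eq_mk_of_mem_edge hpa
  have hspoke : IsSpoke H p a [⟨p, a, y, hy⟩] y :=
    ⟨⟨⟨rfl, rfl⟩, List.nodup_singleton a⟩, (ne_of_edge_eq hy).symm, by simpa using ha.2, by simp⟩
  have hfan := hS.toIsFan.insert hspoke fun g hg hga => by
    rw [dartEdges_cons, dartEdges_nil, insert_empty_eq, Set.disjoint_singleton_left]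
    exact fun hag => hga ((hS.isSpoke g ⟨hg, hga⟩).eq_of_mem a hag hpa).symm
  have N : G.NearLinkage H p := ⟨_, _, a, ha, hfan, fun g hg hga => by
    simpa [hga] using hS.end_mem g ⟨hg, hga⟩⟩
  exact N.linkedIn hE hp

end Shifting

section Augmenting

variable {H : Set E} {u : V}

namespace NearLinkage

variable (N : G.NearLinkage H u)

theorem mem_used_iff {k : E} : k ∈ N.used ↔ ∃ d ∈ N.darts, d.edge = k := by
  simp only [used, darts, mem_dartEdges, Set.mem_ofPred_eq]
  tauto

theorem exists_truncate {l m : List G.Dart} {w : V} (hsplit : N.trail N.gap = l ++ m)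
    (hl : IsDartWalk u l w) (hw : w ≠ u) :
    ∃ N' : G.NearLinkage H u, N'.tip = w ∧ N'.darts ⊆ N.darts := by
  have hspoke : IsSpoke H u N.gap l w := (hsplit ▸ N.isSpoke_gap).initial hl hw
  have hlm : l ⊆ N.trail N.gap := hsplit ▸ List.subset_append_left l m
  refine ⟨N.replaceGap hspoke fun g hg hne =>
    (N.disjoint_of_ne N.gap_mem hg hne.symm).mono_left (dartEdges_mono hlm), ?_, ?_⟩
  · simp [tip, replaceGap]
  · rintro d ⟨g, hg, hd⟩
    rcases eq_or_ne g N.gap with rfl | hne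
    · exact ⟨_, hg, hlm (by simpa [replaceGap] using hd)⟩
    · exact ⟨g, hg, by simpa [replaceGap, hne] using hd⟩

theorem exists_swap {g : E} {l₁ l₂ : List G.Dart} (hg : g ∈ G.edgeCut {u} ∩ H)
    (hsplit : N.trail g = l₁ ++ l₂) (hl₁ : IsDartWalk u l₁ N.tip) :
    ∃ N' : G.NearLinkage H u, (∃ l₂', N'.trail N'.gap = l₁ ++ l₂') ∧ N'.darts ⊆ N.darts := by
  rcases eq_or_ne g N.gap with rfl | hne
  · exact ⟨N, ⟨l₂, hsplit⟩, subset_rfl⟩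
  refine ⟨N.swap hg hne hsplit hl₁, ⟨[], by simp [swap]⟩, ?_⟩
  rintro d ⟨g', hg', hd⟩
  rcases eq_or_ne g' g with rfl | hne'
  · refine ⟨g', hg, hsplit ▸ List.mem_append_left l₂ ?_⟩
    simpa [swap] using hd
  rcases eq_or_ne g' N.gap with rfl | hgap
  · have hd' : d ∈ N.trail N.gap ∨ d ∈ l₂ := by simpa [swap, hne'] using hd
    rcases hd' with hd' | hd'
    · exact ⟨_, hg', hd'⟩
    · exact ⟨g, hg, hsplit ▸ List.mem_append_right l₁ hd'⟩
  · exact ⟨g', hg', by simpa [swap, hne', hgap] using hd⟩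

/-- If the edge of `d` is used in the opposite direction by some spoke, then that spoke passes
through the tip: its final part takes over the deficient spoke, and its initial part, stripped
of the edge of `d`, becomes the deficient one. -/
theorem exists_augment {d : G.Dart} (hsrc : d.src = N.tip) (hdH : d.edge ∈ H) (htgt : d.tgt ≠ u)
    (hd : d ∉ N.darts) :
    ∃ N' : G.NearLinkage H u, N'.tip = d.tgt ∧ N'.darts ⊆ insert d N.darts := by
  by_cases hused : d.edge ∈ N.used
  · obtain ⟨d', ⟨g, hg, hd'g⟩, hedge⟩ := N.mem_used_iff.mp hused
    obtain rfl : d' = d.reverse :=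
      (Dart.eq_or_eq_reverse_of_edge_eq hedge).resolve_left fun h => hd ⟨g, hg, h ▸ hd'g⟩
    obtain ⟨l₁, l₂, hsplit⟩ := List.append_of_mem hd'g
    have hl₁ : IsDartWalk u l₁ d.tgt := (hsplit ▸ (N.isFan.isSpoke g hg).isWalk).split_at.1
    have hl₁d : IsDartWalk u (l₁ ++ [d.reverse]) N.tip := hl₁.append ⟨rfl, hsrc⟩
    obtain ⟨N', ⟨l₂', hsplit'⟩, hN'⟩ := N.exists_swap (l₂ := l₂) hg (by simpa using hsplit) hl₁d
    obtain ⟨N'', htip, hN''⟩ :=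
      N'.exists_truncate (hsplit'.trans (List.append_assoc _ _ _)) hl₁ htgt
    exact ⟨N'', htip, (hN''.trans hN').trans (Set.subset_insert _ _)⟩
  · have hm : IsDartTrail N.tip [d] d.tgt := ⟨⟨hsrc, rfl⟩, List.nodup_singleton _⟩
    refine ⟨N.extend hm (by simpa using ⟨hdH, hused⟩), by simp [tip, extend, replaceGap], ?_⟩
    rintro d' ⟨g, hg, hd'⟩
    rcases eq_or_ne g N.gap with rfl | hne
    · have hd'' : d' ∈ N.trail N.gap ∨ d' = d := by simpa [extend, replaceGap] using hd'
      exact hd''.symm.imp_right fun h => ⟨_, hg, h⟩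
    · exact Or.inr ⟨g, hg, by simpa [extend, replaceGap, hne] using hd'⟩

/-- Darts along which the deficient spoke may be rerouted. -/
def residual : Set G.Dart := {d | d.edge ∈ H ∧ d.tgt ≠ u ∧ d ∉ N.darts}

theorem linkedIn_of_residual_walk (N : G.NearLinkage H u) {l : List G.Dart} {q : V}
    (hl : IsDartWalk N.tip l q) (hnd : l.Nodup) (hres : ∀ d ∈ l, d ∈ N.residual) (hq : q ∈ G.T) :
    G.LinkedIn H u := by
  induction l generalizing N with
  | nil => exact N.linkedIn_of_tip_mem (isDartWalk_nil.mp hl ▸ hq)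
  | cons d l ih =>
    obtain ⟨hsrc, hl⟩ := hl
    obtain ⟨hdl, hnd⟩ := List.nodup_cons.mp hnd
    obtain ⟨⟨hdH, htgt, hd⟩, hres⟩ := List.forall_mem_cons.mp hres
    obtain ⟨N', htip, hN'⟩ := N.exists_augment hsrc hdH htgt hd
    refine ih N' (htip ▸ hl) hnd fun d' hd' => ⟨(hres d' hd').1, (hres d' hd').2.1, fun hmem => ?_⟩
    rcases hN' hmem with rfl | hmem
    · exact hdl hd'
    · exact (hres d' hd').2.2 hmem

theorem mem_darts_of_src_eq {d : G.Dart} (hdH : d.edge ∈ H) (hsrc : d.src = u) : d ∈ N.darts := by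
  have hd : d.edge ∈ G.edgeCut {u} ∩ H := ⟨mem_edgeCut_singleton.mpr (hsrc ▸ d.src_mem), hdH⟩
  obtain ⟨d', hd', hedge, hsrc'⟩ := (N.isFan.isSpoke _ hd).exists_start_dart
  rcases Dart.eq_or_eq_reverse_of_edge_eq hedge with rfl | rfl
  · exact ⟨_, hd, hd'⟩
  · exact absurd (hsrc.trans hsrc'.symm) d.src_ne_tgt

/-- `X` consists of `u` and the vertices reachable from the tip by residual darts. -/
theorem exists_saturated (hN : ¬G.LinkedIn H u) : ∃ X : Set V, u ∈ X ∧ N.tip ∈ X ∧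
    (∀ q ∈ X, q ∈ G.T → q = u) ∧
      ∀ d : G.Dart, d.edge ∈ H → d.src ∈ X → d.tgt ∉ X → d ∈ N.darts := by
  refine ⟨{v | v = u ∨ ∃ l : List G.Dart, IsDartWalk N.tip l v ∧ ∀ d ∈ l, d ∈ N.residual},
    Or.inl rfl, Or.inr ⟨[], rfl, by simp⟩, ?_, fun d hdH hsrc htgt => ?_⟩
  · rintro q (rfl | ⟨l, hl, hres⟩) hq
    · rfl
    · obtain ⟨m, hml, hm, hnd⟩ := hl.exists_path
      have hmnd : m.Nodup := (hm.isDartTrail hnd).nodup.of_map _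
      exact absurd (N.linkedIn_of_residual_walk hm hmnd (fun d hd => hres d (hml hd)) hq) hN
  · rcases hsrc with hsrc | ⟨l, hl, hres⟩
    · exact N.mem_darts_of_src_eq hdH hsrc
    · by_contra hd
      refine htgt (Or.inr ⟨l ++ [d], hl.append ⟨rfl, rfl⟩, ?_⟩)
      simpa [or_imp, forall_and] using ⟨hres, hdH, fun h => htgt (Or.inl h), hd⟩

end NearLinkage

end Augmenting

section Arms

variable {H D : Set E} {u : V}

/-- The near linkage arises by cutting the trail through `d` just before `d`. -/
theorem IsLinkage.exists_nearLinkage {S : E → List G.Dart} {z : E → V} {g : E}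
    {l₁ l₂ : List G.Dart} {d : G.Dart} (hS : IsLinkage H u (G.edgeCut {u} ∩ H) S z)
    (hg : g ∈ G.edgeCut {u} ∩ (H \ {d.edge})) (hsplit : S g = l₁ ++ d :: l₂) :
    ∃ N : G.NearLinkage (H \ {d.edge}) u, N.tip = d.src ∧ (∀ d' ∈ N.darts, d' ∉ l₂) ∧
      ∀ d' ∈ N.darts, ∃ g ∈ G.edgeCut {u} ∩ H, d' ∈ S g := by
  classical
  have hD : G.edgeCut {u} ∩ (H \ {d.edge}) ⊆ G.edgeCut {u} ∩ H :=
    Set.inter_subset_inter_right _ Set.sdiff_subset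
  have hspoke : IsSpoke H u g (l₁ ++ d :: l₂) (z g) := hsplit ▸ hS.isSpoke g (hD hg)
  have hdg : d.edge ∈ dartEdges (S g) := edge_mem_dartEdges (hsplit ▸ by simp)
  have hdu : d.src ≠ u := fun hdu =>
    hg.2.2 (hspoke.eq_of_mem _ (hsplit ▸ hdg) (hdu ▸ d.src_mem)).symm
  have hl₁ := hspoke.isWalk.split_at.1
  have hdisj := (hspoke.split hl₁).2.2
  have hspoke₁ : IsSpoke (H \ {d.edge}) u g l₁ d.src :=
    (hspoke.initial hl₁ hdu).transfer fun k hk =>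
      ⟨(hspoke.initial hl₁ hdu).subset hk, fun hkd =>
        Set.disjoint_left.mp hdisj hk (hkd ▸ edge_mem_dartEdges List.mem_cons_self)⟩
  have hother : ∀ g' ∈ G.edgeCut {u} ∩ (H \ {d.edge}), g' ≠ g →
      Disjoint (dartEdges (l₁ ++ d :: l₂)) (dartEdges (S g')) := fun g' hg' hne =>
    hsplit ▸ hS.disjoint (hD hg) (hD hg') hne.symm
  have hfan := (hS.toIsFan.diff (hD hg) (Set.singleton_subset_iff.mpr hdg)).mono
    (Set.sdiff_subset_sdiff_left hD)
  refine ⟨⟨_, _, g, hg, hfan.insert hspoke₁ fun g' hg' hne =>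
    (hother g' hg' hne).mono_left (dartEdges_mono (List.subset_append_left _ _)),
    fun g' hg' hne => by simpa [hne] using hS.end_mem g' (hD hg')⟩, by simp [NearLinkage.tip],
    ?_, ?_⟩
  all_goals
    rintro d' ⟨g', hg', hd'⟩
    rcases eq_or_ne g' g with rfl | hne
  · replace hd' : d' ∈ l₁ := by simpa using hd'
    exact fun hd'₂ => Set.disjoint_left.mp hdisj (edge_mem_dartEdges hd')
      (edge_mem_dartEdges (List.mem_cons_of_mem _ hd'₂))
  · replace hd' : d' ∈ S g' := by simpa [hne] using hd'
    exact fun hd'₂ => Set.disjoint_left.mp (hother g' hg' hne)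
      (edge_mem_dartEdges (by simp [hd'₂])) (edge_mem_dartEdges hd')
  · exact ⟨g', hD hg, hsplit ▸ List.mem_append_left _ (by simpa using hd')⟩
  · exact ⟨g', hD hg', by simpa [hne] using hd'⟩

theorem IsLinkage.exists_mem_trail_of_not_linkedIn {S : E → List G.Dart} {z : E → V} {f : E}
    (hS : IsLinkage H u (G.edgeCut {u} ∩ H) S z) (hf : ¬G.LinkedIn (H \ {f}) u) :
    ∃ g ∈ G.edgeCut {u} ∩ (H \ {f}), f ∈ dartEdges (S g) := by
  by_contra! hcon
  have hD : G.edgeCut {u} ∩ (H \ {f}) ⊆ G.edgeCut {u} ∩ H :=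
    Set.inter_subset_inter_right _ Set.sdiff_subset
  exact hf ⟨S, z, (hS.toIsFan.mono hD).transfer fun g hg k hk =>
    ⟨(hS.isSpoke g (hD hg)).subset hk, fun hkf => hcon g hg (hkf ▸ hk)⟩,
    fun g hg => hS.end_mem g (hD hg)⟩

theorem IsLinkage.exists_saturated {S : E → List G.Dart} {z : E → V} {f : E}
    (hS : IsLinkage H u (G.edgeCut {u} ∩ H) S z) (hf : ¬G.LinkedIn (H \ {f}) u) :
    ∃ X : Set V, u ∈ X ∧ (∀ q ∈ X, q ∈ G.T → q = u) ∧ f ∈ G.edgeCut X ∩ H ∧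
      ∀ d : G.Dart, d.edge ∈ H → d.src ∈ X → d.tgt ∉ X →
        ∃ g ∈ G.edgeCut {u} ∩ H, d ∈ S g := by
  obtain ⟨g, hg, hfg⟩ := hS.exists_mem_trail_of_not_linkedIn hf
  obtain ⟨d, hd, rfl⟩ := mem_dartEdges.mp hfg
  have hgD : g ∈ G.edgeCut {u} ∩ H := ⟨hg.1, hg.2.1⟩
  have hdH := (hS.isSpoke g hgD).subset hfg
  obtain ⟨l₁, l₂, hsplit⟩ := List.append_of_mem hd
  obtain ⟨N, htip, hl₂, hNS⟩ := hS.exists_nearLinkage hg hsplit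
  obtain ⟨X, hu, hsrc, hT, hX⟩ := N.exists_saturated hf
  rw [htip] at hsrc
  have hspoke : IsSpoke H u g (l₁ ++ d :: l₂) (z g) := hsplit ▸ hS.isSpoke g hgD
  have hwalk := hspoke.isWalk.split_at
  have htgt : d.tgt ∉ X := by
    intro htgt
    have hz : z g ∉ X := fun hz => hspoke.end_ne (hT _ hz (hS.end_mem g hgD))
    obtain ⟨m₁, d', m₂, rfl, -, hsrc', htgt'⟩ :=
      hwalk.2.exists_exit htgt ⟨_, hwalk.2.end_mem_support, hz⟩
    have hd' : d' ∈ m₁ ++ d' :: m₂ := by simp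
    have hd'H : d'.edge ∈ H := hspoke.subset (edge_mem_dartEdges (by simp))
    have hne : d'.edge ≠ d.edge := fun heq => by
      have hnd := hspoke.nodup
      simp [heq, List.nodup_append] at hnd
    exact hl₂ d' (hX d' ⟨hd'H, hne⟩ hsrc' htgt') hd'
  refine ⟨X, hu, hT, ⟨⟨d.src, d.tgt, d.edge_eq, hsrc, htgt⟩, hdH⟩, fun d' hd'H hsrc' htgt' => ?_⟩
  by_cases heq : d'.edge = d.edge
  · rcases Dart.eq_or_eq_reverse_of_edge_eq heq with rfl | rfl
    · exact ⟨g, hgD, hd⟩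
    · exact absurd hsrc' htgt
  · exact hNS d' (hX d' ⟨hd'H, heq⟩ hsrc' htgt')

/-- Edge-disjoint sets `Z h` for the edges `h ∈ δ(X) ∩ H`, each consisting of `h` and edges
inside `X` and joining `u` to both ends of `h`. -/
structure IsArms (G : Grapht V E) (H : Set E) (X : Set V) (u : V) (Z : E → Set E) : Prop where
  subset : ∀ h ∈ G.edgeCut X ∩ H, Z h ⊆ H
  mem_of_ne : ∀ h ∈ G.edgeCut X ∩ H, ∀ k ∈ Z h, k ≠ h → ∀ v ∈ G.I k, v ∈ X
  joins : ∀ h ∈ G.edgeCut X ∩ H, ∀ v ∈ G.I h, G.Joins (Z h) u v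
  disjoint : (G.edgeCut X ∩ H).PairwiseDisjoint Z

theorem IsDartWalk.notMem_edgeCut_of_start_notMem {X : Set V} {a b : V} {l : List G.Dart}
    (h : IsDartWalk a l b) (hX : ∀ d ∈ l, d.tgt ∈ X → d.src ∈ X) (ha : a ∉ X) {k : E}
    (hk : k ∈ dartEdges l) : k ∉ G.edgeCut X := by
  intro hkX
  obtain ⟨d, hd, rfl⟩ := mem_dartEdges.mp hk
  obtain ⟨l₁, l₂, rfl⟩ := List.append_of_mem hd
  have hsrc : d.src ∈ X := by
    have := d.edge_mem_edgeCut_iff.mp hkX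
    have := hX d hd
    tauto
  exact ha (h.split_at.1.support_subset_of_forall_entering hsrc
    (fun d' hd' => hX d' (List.mem_append_left _ hd')) a List.mem_cons_self)

theorem IsDartWalk.eq_of_mem_edgeCut {X : Set V} {a b : V} {l : List G.Dart}
    (h : IsDartWalk a l b) (hX : ∀ d ∈ l, d.tgt ∈ X → d.src ∈ X) {k k' : E}
    (hk : k ∈ dartEdges l) (hk' : k' ∈ dartEdges l) (hkX : k ∈ G.edgeCut X)
    (hkX' : k' ∈ G.edgeCut X) : k = k' := by
  induction l generalizing a with
  | nil => simp at hk
  | cons d l ih =>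
    obtain ⟨hd, hX'⟩ := List.forall_mem_cons.mp hX
    rw [dartEdges_cons] at hk hk'
    by_cases htgt : d.tgt ∈ X
    · have hdX : d.edge ∉ G.edgeCut X := fun hdX =>
        d.edge_mem_edgeCut_iff.mp hdX (iff_of_true (hd htgt) htgt)
      exact ih h.2 hX' (hk.resolve_left fun hkd => hdX (hkd ▸ hkX))
        (hk'.resolve_left fun hkd => hdX (hkd ▸ hkX'))
    · have hl : ∀ j ∈ G.edgeCut X, j ∉ dartEdges l := fun j hjX hj =>
        h.2.notMem_edgeCut_of_start_notMem hX' htgt hj hjX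
      exact (hk.resolve_right (hl k hkX)).trans (hk'.resolve_right (hl k' hkX')).symm

theorem IsLinkage.src_mem_of_tgt_mem {S : E → List G.Dart} {z : E → V} {X : Set V} {g : E}
    {d : G.Dart} (hS : IsLinkage H u D S z)
    (hX : ∀ d : G.Dart, d.edge ∈ H → d.src ∈ X → d.tgt ∉ X → ∃ g ∈ D, d ∈ S g) (hg : g ∈ D)
    (hd : d ∈ S g) (htgt : d.tgt ∈ X) : d.src ∈ X := by
  by_contra hsrc
  have hdg := edge_mem_dartEdges hd
  obtain ⟨g', hg', hd'⟩ := hX d.reverse ((hS.isSpoke g hg).subset hdg) htgt hsrc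
  obtain rfl : g = g' := hS.eq_of_mem hg hg' hdg (mem_dartEdges.mpr ⟨_, hd', rfl⟩)
  have hrev : d.reverse = d := List.inj_on_of_nodup_map (hS.isSpoke g hg).nodup hd' hd rfl
  exact d.src_ne_tgt (congrArg Dart.tgt hrev)

theorem IsLinkage.exists_arm {S : E → List G.Dart} {z : E → V} {X : Set V} {h : E}
    (hS : IsLinkage H u D S z)
    (hX : ∀ d : G.Dart, d.edge ∈ H → d.src ∈ X → d.tgt ∉ X → ∃ g ∈ D, d ∈ S g)
    (hh : h ∈ G.edgeCut X ∩ H) :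
    ∃ Zh : Set E, (∀ k ∈ Zh, k ≠ h → ∀ v ∈ G.I k, v ∈ X) ∧ (∀ v ∈ G.I h, G.Joins Zh u v) ∧
      ∃ g ∈ D, h ∈ dartEdges (S g) ∧ Zh ⊆ dartEdges (S g) := by
  obtain ⟨d, rfl, hsrc, htgt⟩ := Dart.exists_outward hh.1
  obtain ⟨g, hg, hd⟩ := hX d hh.2 hsrc htgt
  obtain ⟨l₁, l₂, hsplit⟩ := List.append_of_mem hd
  have hl₁ := (hsplit ▸ (hS.isSpoke g hg).isWalk).split_at.1
  have hl₁X := hl₁.support_subset_of_forall_entering hsrc fun d' hd' =>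
    hS.src_mem_of_tgt_mem hX hg (hsplit ▸ List.mem_append_left _ hd')
  refine ⟨insert d.edge (dartEdges l₁), fun k hk hne v hv => ?_, fun v hv => ?_, g, hg,
    edge_mem_dartEdges hd, ?_⟩
  · exact hl₁X v (hl₁.mem_support_of_mem_edge (hk.resolve_left hne) hv)
  · exact Joins.trans ⟨l₁, hl₁, Set.subset_insert _ _⟩
      (Joins.of_mem_edge (Set.mem_insert _ _) d.src_mem hv)
  · rw [hsplit, dartEdges_append, dartEdges_cons]
    grind

theorem IsLinkage.exists_isArms {S : E → List G.Dart} {z : E → V} {X : Set V}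
    (hS : IsLinkage H u D S z)
    (hX : ∀ d : G.Dart, d.edge ∈ H → d.src ∈ X → d.tgt ∉ X → ∃ g ∈ D, d ∈ S g) :
    ∃ Z : E → Set E, G.IsArms H X u Z ∧ ∀ h ∈ G.edgeCut X ∩ H, ∃ g ∈ D, Z h ⊆ dartEdges (S g) := by
  choose! Z hZX hZjoins hZS using fun h => hS.exists_arm (h := h) hX
  refine ⟨Z, ⟨fun h hh => ?_, hZX, hZjoins, fun h hh h' hh' hne => ?_⟩, fun h hh => ?_⟩
  · obtain ⟨g, hg, -, hZg⟩ := hZS h hh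
    exact hZg.trans (hS.isSpoke g hg).subset
  · refine Set.disjoint_left.mpr fun k hk hk' => hne ?_
    obtain ⟨g, hg, hhg, hZg⟩ := hZS h hh
    obtain ⟨g', hg', hhg', hZg'⟩ := hZS h' hh'
    obtain rfl : g = g' := hS.eq_of_mem hg hg' (hZg hk) (hZg' hk')
    exact (hS.isSpoke g hg).isWalk.eq_of_mem_edgeCut
      (fun d hd => hS.src_mem_of_tgt_mem hX hg hd) hhg hhg' hh.1 hh'.1
  · obtain ⟨g, hg, -, hZg⟩ := hZS h hh
    exact ⟨g, hg, hZg⟩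

section Detour

variable {X : Set V} {Z : E → Set E}

theorem IsArms.exists_mem (hZ : G.IsArms H X u Z) {h k : E} (hh : h ∈ G.edgeCut X ∩ H)
    (hk : k ∈ Z h) : ∃ v ∈ G.I k, v ∈ X := by
  rcases eq_or_ne k h with rfl | hne
  · exact (mem_edgeCut_iff.mp hh.1).1
  · obtain ⟨v, hv⟩ : ∃ v, v ∈ G.I k := ⟨_, (G.I k).out_fst_mem⟩
    exact ⟨v, hv, hZ.mem_of_ne h hh k hk hne v hv⟩

/-- The edges of a walk outside `X`, together with the arms of its edges in `δ(X)`. -/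
def reroute (G : Grapht V E) (H : Set E) (X : Set V) (Z : E → Set E) (l : List G.Dart) : Set E :=
  {k | k ∈ dartEdges l ∧ ∀ v ∈ G.I k, v ∉ X} ∪ ⋃ h ∈ G.edgeCut X ∩ H ∩ dartEdges l, Z h

theorem IsArms.joins_reroute (hZ : G.IsArms H X u Z) {p q : V} {l : List G.Dart}
    (hl : IsDartWalk p l q) (hlH : dartEdges l ⊆ H) (hp : p ∉ X) :
    G.Joins (G.reroute H X Z l) p u ∨ G.Joins (G.reroute H X Z l) p q := by
  by_cases hlX : ∃ v ∈ support p l, v ∉ Xᶜ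
  · obtain ⟨l₁, d, l₂, rfl, hl₁, hsrc, htgt⟩ := hl.exists_exit hp hlX
    have hwalk := hl.split_at.1
    have hd : d.edge ∈ dartEdges (l₁ ++ d :: l₂) := edge_mem_dartEdges (by simp)
    have hdX : d.edge ∈ G.edgeCut X := by
      rw [d.edge_mem_edgeCut_iff]
      tauto
    refine Or.inl (Joins.trans ⟨l₁, hwalk, fun k hk => Or.inl ⟨by simp [hk], fun v hv =>
      hl₁ v (hwalk.mem_support_of_mem_edge hk hv)⟩⟩ (Joins.mono ?_
        (hZ.joins d.edge ⟨hdX, hlH hd⟩ d.src d.src_mem).symm))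
    exact fun k hk => Or.inr (Set.mem_biUnion ⟨⟨hdX, hlH hd⟩, hd⟩ hk)
  · push Not at hlX
    exact Or.inr ⟨l, hl, fun k hk => Or.inl ⟨hk, fun v hv =>
      hlX v (hl.mem_support_of_mem_edge hk hv)⟩⟩

theorem IsArms.disjoint_reroute (hZ : G.IsArms H X u Z) {l m : List G.Dart}
    (hlm : Disjoint (dartEdges l) (dartEdges m)) :
    Disjoint (G.reroute H X Z l) (G.reroute H X Z m) := by
  rw [Set.disjoint_left] at hlm ⊢
  simp only [reroute, Set.mem_union, Set.mem_ofPred_eq, Set.mem_iUnion, exists_prop]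
  rintro k (⟨hk, hkX⟩ | ⟨h, ⟨hh, hhl⟩, hk⟩) (⟨hk', hkX'⟩ | ⟨h', ⟨hh', hhm⟩, hk'⟩)
  · exact hlm hk hk'
  · obtain ⟨v, hv, hvX⟩ := hZ.exists_mem hh' hk'
    exact hkX v hv hvX
  · obtain ⟨v, hv, hvX⟩ := hZ.exists_mem hh hk
    exact hkX' v hv hvX
  · obtain rfl := hZ.disjoint.elim hh hh' (Set.not_disjoint_iff.mpr ⟨k, hk, hk'⟩)
    exact hlm hhl hhm

theorem IsArms.reroute_subset (hZ : G.IsArms H X u Z) {f : E} (hf : f ∈ G.edgeCut X ∩ H)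
    {l : List G.Dart} (hlH : dartEdges l ⊆ H) (hfl : f ∉ dartEdges l) :
    G.reroute H X Z l ⊆ H \ Z f := by
  simp only [reroute]
  rintro k (⟨hk, hkX⟩ | hk)
  · refine ⟨hlH hk, fun hkf => ?_⟩
    obtain ⟨v, hv, hvX⟩ := hZ.exists_mem hf hkf
    exact hkX v hv hvX
  · simp only [Set.mem_iUnion, exists_prop] at hk
    obtain ⟨h, ⟨hh, hhl⟩, hk⟩ := hk
    refine ⟨hZ.subset h hh hk, fun hkf => hfl ?_⟩
    obtain rfl := hZ.disjoint.elim hh hf (Set.not_disjoint_iff.mpr ⟨k, hk, hkf⟩)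
    exact hhl

theorem IsArms.eq_of_mem_reroute (hZ : G.IsArms H X u Z) {p z : V} {g k : E} {l : List G.Dart}
    (hl : IsSpoke H p g l z) (hp : p ∉ X) (hk : k ∈ G.reroute H X Z l) (hpk : p ∈ G.I k) :
    k = g := by
  refine hl.eq_of_mem k ?_ hpk
  rcases hk with hk | hk
  · exact hk.1
  · simp only [Set.mem_iUnion, exists_prop] at hk
    obtain ⟨h, ⟨hh, hhl⟩, hk⟩ := hk
    rcases eq_or_ne k h with rfl | hne
    · exact hhl
    · exact absurd (hZ.mem_of_ne h hh k hk hne p hpk) hp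

theorem IsArms.exists_linkedOn (hZ : G.IsArms H X u Z) (hu : u ∈ X) (huT : u ∈ G.T) {f : E}
    (hf : f ∈ G.edgeCut X ∩ H) {p : V} (hp : p ∉ X) (h : G.LinkedIn H p) :
    ∃ a, G.LinkedOn (H \ Z f) p ((G.edgeCut {p} ∩ H) \ {a}) := by
  obtain ⟨S, z, hS⟩ := h
  obtain ⟨a, ha⟩ : ∃ a, ∀ g ∈ (G.edgeCut {p} ∩ H) \ {a}, f ∉ dartEdges (S g) := by
    by_cases hfS : ∃ a ∈ G.edgeCut {p} ∩ H, f ∈ dartEdges (S a)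
    · obtain ⟨a, ha, hfa⟩ := hfS
      exact ⟨a, fun g hg hfg => hg.2 (hS.eq_of_mem hg.1 ha hfg hfa)⟩
    · exact ⟨f, fun g hg hfg => hfS ⟨g, hg.1, hfg⟩⟩
  refine ⟨a, linkedOn_of_joins (C := fun g => G.reroute H X Z (S g)) (fun g hg => ?_)
    (fun g hg => hZ.reroute_subset hf (hS.isSpoke g hg.1).subset (ha g hg))
    (fun g hg k hk hpk => hZ.eq_of_mem_reroute (hS.isSpoke g hg.1) hp hk hpk)
    fun g hg g' hg' hne => hZ.disjoint_reroute (hS.disjoint hg.1 hg'.1 hne)⟩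
  have hg' := hS.isSpoke g hg.1
  rcases hZ.joins_reroute hg'.isWalk hg'.subset hp with hj | hj
  · exact ⟨u, huT, fun hup => hp (hup ▸ hu), hj⟩
  · exact ⟨z g, hS.end_mem g hg.1, hg'.end_ne, hj⟩

theorem exists_detour (hlinked : ∀ p ∈ G.T, G.LinkedIn H p) {f : E} (hu : u ∈ G.T)
    (hf : ¬G.LinkedIn (H \ {f}) u) :
    ∃ C : Set E, (∀ k ∈ C, k ≠ f → ∀ v ∈ G.I k, v ∈ G.T → v = u) ∧
      (∀ v ∈ G.I f, G.Joins C u v) ∧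
        ∀ p ∈ G.T, ∃ a, G.LinkedOn (H \ C) p ((G.edgeCut {p} ∩ H) \ {a}) := by
  obtain ⟨S, z, hS⟩ := hlinked u hu
  obtain ⟨X, huX, hXT, hfX, hX⟩ := hS.exists_saturated hf
  obtain ⟨Z, hZ, hZS⟩ := hS.exists_isArms hX
  refine ⟨Z f, fun k hk hne v hv hvT => hXT v (hZ.mem_of_ne f hfX k hk hne v hv) hvT,
    hZ.joins f hfX, fun p hp => ?_⟩
  by_cases hpX : p ∈ X
  · obtain rfl := hXT p hpX hp
    obtain ⟨g, hg, hZg⟩ := hZS f hfX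
    exact ⟨g, S, z, hS.toIsFan.diff hg hZg, fun g' hg' => hS.end_mem g' hg'.1⟩
  · exact hZ.exists_linkedOn huX hu hfX hpX (hlinked p hp)

end Detour

end Arms

section Removal

theorem exists_append_singleton_of_nil_of_not {α : Type*} {Q : List α → Prop} {l : List α}
    (hnil : Q []) (hl : ¬Q l) : ∃ l₁ b l₂, l = l₁ ++ b :: l₂ ∧ Q l₁ ∧ ¬Q (l₁ ++ [b]) := by
  induction l using List.reverseRecOn with
  | nil => exact absurd hnil hl
  | append_singleton l b ih =>
    by_cases hQ : Q l
    · exact ⟨l, b, [], rfl, hQ, hl⟩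
    · obtain ⟨l₁, c, l₂, rfl, h⟩ := ih hQ
      exact ⟨l₁, c, l₂ ++ [b], by simp, h⟩

theorem IsDartTPath.exists_cons {t q : V} {l : List G.Dart} {e : E} (h : IsDartTPath t l q)
    (he : e ∈ dartEdges l) (hte : t ∈ G.I e) : ∃ d m, l = d :: m ∧ d.edge = e := by
  cases l with
  | nil => simp at he
  | cons d m =>
    refine ⟨d, m, rfl, h.isWalk.eq_of_mem_start h.nodup (by simp) he ?_ hte⟩
    exact h.isWalk.1 ▸ d.src_mem

theorem IsDartTPath.eq_start_of_mem_prefix {t q p : V} {l₁ l₂ : List G.Dart} {d : G.Dart} {k : E}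
    (h : IsDartTPath t (l₁ ++ d :: l₂) q) (hk : k ∈ dartEdges l₁) (hp : p ∈ G.T)
    (hpk : p ∈ G.I k) : p = t := by
  obtain ⟨hl₁, hl₂⟩ := h.isWalk.split_at
  have hpl₁ := hl₁.mem_support_of_mem_edge hk hpk
  have hsupp : support t (l₁ ++ d :: l₂) = support t l₁ ++ support d.tgt l₂ := by simp [support]
  have hnd := h.nodup
  rw [hsupp] at hnd
  refine (h.eq_or_eq_of_mem p (hsupp ▸ List.mem_append_left _ hpl₁) hp).resolve_right ?_
  rintro rfl
  exact List.disjoint_of_nodup_append hnd hpl₁ hl₂.end_mem_support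

theorem LinkedIn.exists_isDartTPath {t : V} {e : E} (h : G.LinkedIn Set.univ t) (ht : t ∈ G.T)
    (he : e ∈ G.edgeCut {t}) : ∃ (l : List G.Dart) (q : V), IsDartTPath t l q ∧
      e ∈ dartEdges l ∧ ∀ C ⊆ dartEdges l, e ∈ C → G.LinkedIn Cᶜ t := by
  obtain ⟨S, z, hS⟩ := h
  have heD : e ∈ G.edgeCut {t} ∩ Set.univ := ⟨he, trivial⟩
  have hspoke := hS.isSpoke e heD
  obtain ⟨l, q, hl, hlS⟩ := Joins.exists_isDartTPath ⟨_, hspoke.isWalk, subset_rfl⟩ ht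
    (hS.end_mem e heD) hspoke.end_ne
  obtain ⟨d, hd, hdt⟩ := hl.isWalk.exists_start_dart hl.end_ne
  have hdl := edge_mem_dartEdges hd
  refine ⟨l, q, hl, hspoke.eq_of_mem _ (hlS hdl) (hdt ▸ d.src_mem) ▸ hdl, fun C hC heC => ?_⟩
  have hlinked : G.LinkedOn (Set.univ \ C) t ((G.edgeCut {t} ∩ Set.univ) \ {e}) :=
    ⟨S, z, hS.toIsFan.diff heD (hC.trans hlS), fun g hg => hS.end_mem g hg.1⟩
  have hsub : G.edgeCut {t} ∩ Cᶜ ⊆ (G.edgeCut {t} ∩ Set.univ) \ {e} := fun k hk =>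
    ⟨⟨hk.1, trivial⟩, fun hke => hk.2 (hke ▸ heC)⟩
  exact hlinked.mono (fun _ hk => hk.2) hsub

theorem InnerEulerian.exists_isDartTPath_of_not_linkedIn (h : G.InnerEulerian) {t q u : V}
    {l₁ l₂ : List G.Dart} {b : G.Dart} {e : E} (hL : IsDartTPath t (l₁ ++ b :: l₂) q)
    (he : e ∈ dartEdges (l₁ ++ b :: l₂)) (hte : t ∈ G.I e)
    (hlinked : ∀ p ∈ G.T, G.LinkedIn (dartEdges l₁)ᶜ p) (hu : u ∈ G.T) (hut : u ≠ t)
    (hfail : ¬G.LinkedIn ((dartEdges l₁)ᶜ \ {b.edge}) u) :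
    ∃ (l : List G.Dart) (q : V), IsDartTPath t l q ∧ e ∈ dartEdges l ∧
      ∀ p ∈ G.T, G.LinkedIn (dartEdges l)ᶜ p := by
  obtain ⟨C, hCu, hCjoins, hC⟩ := exists_detour hlinked hu hfail
  have hjoins : G.Joins (dartEdges l₁ ∪ C) t u :=
    Joins.trans ⟨l₁, hL.isWalk.split_at.1, Set.subset_union_left⟩
      (Joins.mono Set.subset_union_right (hCjoins b.src b.src_mem).symm)
  obtain ⟨l, q', hl, hlC⟩ := hjoins.exists_isDartTPath hL.start_mem hu hut
  have hstar : ∀ k ∈ dartEdges l₁ ∪ C, t ∈ G.I k → k = e := by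
    intro k hk htk
    refine hL.isWalk.eq_of_mem_start hL.nodup ?_ he htk hte
    rw [dartEdges_append, dartEdges_cons]
    refine hk.imp_right fun hk => Or.inl (by_contra fun hne => ?_)
    exact hut (hCu k hk hne t htk hL.start_mem).symm
  have hel : e ∈ dartEdges l := by
    obtain ⟨d, hd, hdt⟩ := hl.isWalk.exists_start_dart hl.end_ne
    exact hstar _ (hlC (edge_mem_dartEdges hd)) (hdt ▸ d.src_mem) ▸ edge_mem_dartEdges hd
  have hE := h.innerEulerianOn_compl (hl.isWalk.isDartTrail hl.nodup) hl.start_mem hl.end_mem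
  refine ⟨l, q', hl, hel, fun p hp => ?_⟩
  obtain ⟨a, ha⟩ := hC p hp
  refine LinkedOn.linkedIn_of_diff_singleton hE hp (ha.mono ?_ (Set.sdiff_subset_sdiff_left ?_))
  · exact fun k hk hkl => (hlC hkl).elim hk.1 hk.2
  · rintro k ⟨hkp, hkl⟩
    refine ⟨hkp, fun hkl₁ => hkl ?_⟩
    have hpk := mem_edgeCut_singleton.mp hkp
    obtain rfl := hL.eq_start_of_mem_prefix hkl₁ hp hpk
    exact hstar k (Or.inl hkl₁) hpk ▸ hel

theorem InnerEulerian.exists_isDartTPath (h : G.InnerEulerian)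
    (hlinked : ∀ p ∈ G.T, G.LinkedIn Set.univ p) {t : V} {e : E} (ht : t ∈ G.T)
    (he : e ∈ G.edgeCut {t}) : ∃ (l : List G.Dart) (q : V), IsDartTPath t l q ∧
      e ∈ dartEdges l ∧ ∀ p ∈ G.T, G.LinkedIn (dartEdges l)ᶜ p := by
  obtain ⟨L, q, hL, heL, hLt⟩ := (hlinked t ht).exists_isDartTPath ht he
  by_cases hall : ∀ p ∈ G.T, G.LinkedIn (dartEdges L)ᶜ p
  · exact ⟨L, q, hL, heL, hall⟩
  obtain ⟨l₁, b, l₂, rfl, hl₁, hb⟩ := exists_append_singleton_of_nil_of_not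
    (Q := fun l => ∀ p ∈ G.T, G.LinkedIn (dartEdges l)ᶜ p) (by simpa using hlinked) hall
  push Not at hb
  obtain ⟨u, hu, hub⟩ := hb
  have hte := mem_edgeCut_singleton.mp he
  have hut : u ≠ t := by
    rintro rfl
    refine hub (hLt _ (dartEdges_mono (by simp)) ?_)
    obtain ⟨d, m, hdm, rfl⟩ := hL.exists_cons heL hte
    refine edge_mem_dartEdges ?_
    cases l₁ <;> simp_all
  refine h.exists_isDartTPath_of_not_linkedIn hL heL hte hl₁ hu hut fun hlin => hub ?_
  convert hlin using 1
  ext k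
  simp [and_comm]

end Removal

end Grapht

theorem remove_one_tpath_general {V : Type u} {E : Type v} (G : Grapht V E)
    (h1 : G.InnerEulerian) (h2 : G.LinkabilityCondition)
    (e : E) (he : ∃ t ∈ G.T, e ∈ G.edgeCut {t}) :
    ∃ P : G.Path, G.IsTPath P ∧ e ∈ P.edges ∧
      (G.restrict P.edgeSetᶜ).InnerEulerian ∧
      (G.restrict P.edgeSetᶜ).LinkabilityCondition := by
  obtain ⟨t, ht, hte⟩ := he
  obtain ⟨l, q, hl, hel, hlinked⟩ :=
    h1.exists_isDartTPath (fun p hp => Grapht.linkedIn_univ_of_linked hp (h2 p hp)) ht hte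
  obtain ⟨P, hP, hPl⟩ := hl.exists_isTPath
  have hE := h1.innerEulerianOn_compl (hl.isWalk.isDartTrail hl.nodup) ht hl.end_mem
  rw [← hPl] at hE hel hlinked
  exact ⟨P, hP, hel, hE.innerEulerian_restrict, fun p hp =>
    Grapht.linked_restrict_of_linkedIn hp (hlinked p hp)⟩

/-- In a countable inner Eulerian grapht satisfying the linkability condition, every
edge incident with a terminal lies on a `T`-path whose removal preserves both being
inner Eulerian and the linkability condition. -/
theorem remove_one_tpath {V : Type u} {E : Type v} [Countable E] (G : Grapht V E)
    (h1 : G.InnerEulerian) (h2 : G.LinkabilityCondition)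
    (e : E) (he : ∃ t ∈ G.T, e ∈ G.edgeCut {t}) :
    ∃ P : G.Path, G.IsTPath P ∧ e ∈ P.edges ∧
      (G.restrict P.edgeSetᶜ).InnerEulerian ∧
      (G.restrict P.edgeSetᶜ).LinkabilityCondition :=
  remove_one_tpath_general G h1 h2 e he
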